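/- Let p be a prime, let n ≥ 3 be odd, and let f_0 ∈ ℤ_p be nonzero with v_p(f_0) odd (so in particular p divides f_0). Then the p-adic density, within the set F_{n,max}(f_0,ℤ_p), of the subset of squareful forms equals p^{(1-n)/2}·(1 + p^{-1})^{-1}. -/

import Mathlib

open Polynomial Matrix MeasureTheory
open scoped Classical
noncomputable section
namespace BHS



/-! ### Binary forms and the rings they cut out, over a general base -/

variable (R K : Type) [CommRing R] [Field K] [Algebra R K]

/-- The one-variable polynomial `F(x,1)` of the binary form of degree `n` with
coefficient vector `c` (so `F(x,z) = ∑ c i · x^(n-i) · z^i`), over `K`. -/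
def binPoly (n : ℕ) (c : ℕ → R) : Polynomial K :=
  ∑ i ∈ Finset.range (n + 1), Polynomial.C (algebraMap R K (c i)) * Polynomial.X ^ (n - i)

/-- The étale algebra `K_F = K[x]/(F(x,1))`. -/
abbrev KF (n : ℕ) (c : ℕ → R) : Type := AdjoinRoot (binPoly R K n c)

/-- θ, the image of x in K_F. -/
def θF (n : ℕ) (c : ℕ → R) : KF R K n c := AdjoinRoot.root _

/-- `ζ_i = ∑_{j<i} f_j θ^{i-j}`. -/
def ζF (n : ℕ) (c : ℕ → R) (i : ℕ) : KF R K n c :=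
  ∑ j ∈ Finset.range i, algebraMap R (KF R K n c) (c j) * θF R K n c ^ (i - j)

/-- The ring `R_F`, as the free `R`-submodule of `K_F` with basis `1, ζ_1, …, ζ_{n-1}`
(a subring by Nakagawa's theorem). -/
def RFmod (n : ℕ) (c : ℕ → R) : Submodule R (KF R K n c) :=
  Submodule.span R ({1} ∪ {x | ∃ i, 1 ≤ i ∧ i ≤ n - 1 ∧ x = ζF R K n c i})

/-- The fractional ideal `I_F^k`, as the free `R`-submodule of `K_F` with basis
`1, θ, …, θ^k, ζ_{k+1}, …, ζ_{n-1}`. -/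
def IFmod (n : ℕ) (c : ℕ → R) (k : ℕ) : Submodule R (KF R K n c) :=
  Submodule.span R ({x | ∃ j ≤ k, x = θF R K n c ^ j} ∪
    {x | ∃ i, k + 1 ≤ i ∧ i ≤ n - 1 ∧ x = ζF R K n c i})

/-- `R_F` is the maximal order (the integral closure of `R`) in `K_F`. -/
def IsMaxOrder (n : ℕ) (c : ℕ → R) : Prop :=
  RFmod R K n c = Subalgebra.toSubmodule (integralClosure R (KF R K n c))

/-- `M` is stable under multiplication by `R_F`, i.e. `M` is an `R_F`-submodule of `K_F`. -/
def IsStable (n : ℕ) (c : ℕ → R) (M : Submodule R (KF R K n c)) : Prop :=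
  ∀ ρ ∈ RFmod R K n c, ∀ x ∈ M, ρ * x ∈ M

/-- `M` is an invertible fractional ideal of `R_F`. -/
def IsInvIdeal (n : ℕ) (c : ℕ → R) (M : Submodule R (KF R K n c)) : Prop :=
  IsStable R K n c M ∧
    ∃ N : Submodule R (KF R K n c), IsStable R K n c N ∧ M * N = RFmod R K n c

/-- The principal fractional ideal of `R_F` generated by `α`. -/
def principal (n : ℕ) (c : ℕ → R) (α : KF R K n c) : Submodule R (KF R K n c) :=
  Submodule.span R {α} * RFmod R K n c

/-- `ρ` is a unit of the order `R_F`. -/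
def IsUnitRF (n : ℕ) (c : ℕ → R) (ρ : KF R K n c) : Prop :=
  ρ ∈ RFmod R K n c ∧ ∃ σ ∈ RFmod R K n c, ρ * σ = 1

/-- `#R_F^×[2]`, the number of 2-torsion units of `R_F`. -/
def twoTorsUnitsCount (n : ℕ) (c : ℕ → R) : ℕ :=
  Nat.card {ρ : KF R K n c // ρ ∈ RFmod R K n c ∧ ρ ^ 2 = 1}

/-- The number of 2-torsion elements of the ideal class group `Cl(R_F)`: the number of
invertible fractional ideals of `R_F` whose square is principal, counted modulo
principal fractional ideals. -/
def clTwoCount (n : ℕ) (c : ℕ → R) : ℕ :=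
  Nat.card (Quot (fun (I J : {M : Submodule R (KF R K n c) //
      IsInvIdeal R K n c M ∧
        ∃ α : KF R K n c, IsUnit α ∧ M * M = principal R K n c α}) =>
    ∃ α : KF R K n c, IsUnit α ∧
      (I : Submodule R (KF R K n c)) =
        Submodule.span R {α} * (J : Submodule R (KF R K n c))))

/-- `α ∈ K_F` is totally positive: positive under every real embedding. -/
def TotPos (n : ℕ) (c : ℕ → R) (α : KF R K n c) : Prop :=
  ∀ φ : KF R K n c →+* ℝ, 0 < φ α

/-- The number of 2-torsion elements of the narrow class group `Cl⁺(R_F)`. -/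
def clTwoCountPlus (n : ℕ) (c : ℕ → R) : ℕ :=
  Nat.card (Quot (fun (I J : {M : Submodule R (KF R K n c) //
      IsInvIdeal R K n c M ∧
        ∃ α : KF R K n c, IsUnit α ∧ TotPos R K n c α ∧ M * M = principal R K n c α}) =>
    ∃ α : KF R K n c, IsUnit α ∧ TotPos R K n c α ∧
      (I : Submodule R (KF R K n c)) =
        Submodule.span R {α} * (J : Submodule R (KF R K n c))))

/-- The order of the ideal class group of `R_F`. -/
def clCount (n : ℕ) (c : ℕ → R) : ℕ :=
  Nat.card (Quot (fun (I J : {M : Submodule R (KF R K n c) // IsInvIdeal R K n c M}) =>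
    ∃ α : KF R K n c, IsUnit α ∧
      (I : Submodule R (KF R K n c)) =
        Submodule.span R {α} * (J : Submodule R (KF R K n c))))

/-- The order of the narrow class group of `R_F`. -/
def clCountPlus (n : ℕ) (c : ℕ → R) : ℕ :=
  Nat.card (Quot (fun (I J : {M : Submodule R (KF R K n c) // IsInvIdeal R K n c M}) =>
    ∃ α : KF R K n c, IsUnit α ∧ TotPos R K n c α ∧
      (I : Submodule R (KF R K n c)) =
        Submodule.span R {α} * (J : Submodule R (KF R K n c))))




/-! ### p-adic machinery -/

variable (p : ℕ) [Fact p.Prime]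

instance : MeasurableSpace ℤ_[p] := borel _
instance : BorelSpace ℤ_[p] := ⟨rfl⟩

/-- Haar probability measure on `ℤ_p^n`. -/
def haarP (n : ℕ) : Measure (Fin n → ℤ_[p]) :=
  Measure.addHaarMeasure ⟨⟨Set.univ, isCompact_univ⟩, by rw [interior_univ]; exact Set.univ_nonempty⟩

/-- The `p`-adic density of `A` within `B` (subsets of the coefficient space `ℤ_p^n`). -/
def densIn (n : ℕ) (A B : Set (Fin n → ℤ_[p])) : ℝ :=
  (haarP p n A).toReal / (haarP p n B).toReal

/-- The coefficient vector of the degree-`n` binary form with leading coefficient `f0` and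
remaining coefficients `v`. -/
def consF0 (n : ℕ) (f0 : ℤ_[p]) (v : Fin n → ℤ_[p]) : ℕ → ℤ_[p] :=
  fun j => if j = 0 then f0 else if h : j - 1 < n then v ⟨j - 1, h⟩ else 0

/-- The reduction of the binary form with coefficients `c` modulo `p`, as a polynomial in
two variables `x = X 0`, `z = X 1` over `F_p`. -/
def redForm (n : ℕ) (c : ℕ → ℤ_[p]) : MvPolynomial (Fin 2) (ZMod p) :=
  ∑ i ∈ Finset.range (n + 1),
    MvPolynomial.C (PadicInt.toZMod (c i)) * MvPolynomial.X 0 ^ (n - i) * MvPolynomial.X 1 ^ i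

/-- `F` is squareful over `ℤ_p`: `F ≡ κ·z^{e}·H² (mod p)` with `e > 0`, `κ ∈ F_p^×` and
`H` a monic binary form over `F_p` (hence not divisible by `z`). -/
def SquarefulP (n : ℕ) (c : ℕ → ℤ_[p]) : Prop :=
  ∃ (κ : (ZMod p)ˣ) (e d : ℕ) (H : MvPolynomial (Fin 2) (ZMod p)),
    0 < e ∧ H.IsHomogeneous d ∧ MvPolynomial.coeff (Finsupp.single 0 d) H = 1 ∧
    redForm p n c = MvPolynomial.C (κ : ZMod p) * MvPolynomial.X 1 ^ e * H ^ 2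

/-- `F` is evenly ramified over `ℤ_p`: `F ≡ κ·H² (mod p)` with `κ ∈ F_p^×`. -/
def EvenRamP (n : ℕ) (c : ℕ → ℤ_[p]) : Prop :=
  ∃ (κ : (ZMod p)ˣ) (H : MvPolynomial (Fin 2) (ZMod p)),
    redForm p n c = MvPolynomial.C (κ : ZMod p) * H ^ 2

/-- `F` is primitive over `ℤ_p`: its coefficients generate the unit ideal. -/
def PrimP (n : ℕ) (c : ℕ → ℤ_[p]) : Prop := ∃ i ≤ n, IsUnit (c i)

/-- `F` is separable (of degree `n`) over `ℚ_p`. -/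
def SepDegP (n : ℕ) (c : ℕ → ℤ_[p]) : Prop :=
  (binPoly ℤ_[p] ℚ_[p] n c).Separable ∧ (binPoly ℤ_[p] ℚ_[p] n c).natDegree = n

/-- The determinant of the Sylvester matrix of `F(x,1)` (of formal degree n) and
`F'(x,1)` (of formal degree n-1); it equals `±f_0` times the discriminant of the form. -/
def sylvDet (S : Type) [CommRing S] (n : ℕ) (c : ℕ → S) : S :=
  Matrix.det (Matrix.of (fun (i j : Fin (n + (n - 1))) =>
    if (i : ℕ) < n - 1 then
      (if (i : ℕ) ≤ (j : ℕ) ∧ (j : ℕ) ≤ (i : ℕ) + n then c ((j : ℕ) - (i : ℕ)) else 0)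
    else
      (if (i : ℕ) - (n - 1) ≤ (j : ℕ) ∧ (j : ℕ) ≤ ((i : ℕ) - (n - 1)) + (n - 1) then
        ((n - ((j : ℕ) - ((i : ℕ) - (n - 1))) : ℕ) : S) * c ((j : ℕ) - ((i : ℕ) - (n - 1)))
      else 0)))

/-- The discriminant of the form with coefficients `c` is not divisible by `p²`. -/
def DiscOK (n : ℕ) (c : ℕ → ℤ_[p]) : Prop :=
  ¬ ((p : ℤ_[p]) ^ 2 * c 0 ∣ sylvDet ℤ_[p] n c)

/-- The reduction modulo `p` of the degree-`n` binary form with coefficients `c` is a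
separable binary form over `F_p`. -/
def SepFormModP (n : ℕ) (c : ℕ → ℤ_[p]) : Prop :=
  (∑ i ∈ Finset.range (n + 1),
      Polynomial.C (PadicInt.toZMod (c i)) * (Polynomial.X : Polynomial (ZMod p)) ^ (n - i)).Separable ∧
  n - 1 ≤ (∑ i ∈ Finset.range (n + 1),
      Polynomial.C (PadicInt.toZMod (c i)) * (Polynomial.X : Polynomial (ZMod p)) ^ (n - i)).natDegree

end BHS

/-!
Maximality of `R_F` can be tested locally: at each irreducible factor of the reduction it is
Dedekind's condition that the form does not lie in the square of the corresponding maximal ideal,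
and the point at infinity contributes the same condition for the reversed form. All of this depends
on the form modulo `p ^ 2` only. Since `p ∣ f₀`, a form may be written as a canonical lift of its
reduction `F`, of degree less than `n`, plus `p * B`, where every class `B` of degree less than `n`
occurs modulo `p`. When the lift is `h ^ 2 * s` with `s` squarefree modulo `p`, Dedekind's condition
says that no prime whose square divides `F` divides `B`; at infinity, `F` must have degree `n - 1`
as soon as `p ^ 2 ∣ f₀`. So the density is a ratio of numbers of pairs `(F, B)` over the residue
field, counted by extracting from an arbitrary pair the largest `h` with `h ^ 2 ∣ F` and `h ∣ B`.
-/

namespace BHS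

section SquarefreeRel

variable {α : Type*}

/-- `F` is squarefree relative to `B`: only units `h` satisfy both `h ^ 2 ∣ F` and `h ∣ B`.
Taking `B = 0` gives back `Squarefree F`. -/
def SquarefreeRel [Monoid α] (F B : α) : Prop :=
  ∀ h, h ^ 2 ∣ F → h ∣ B → IsUnit h

lemma squarefreeRel_zero_iff [MonoidWithZero α] {F : α} : SquarefreeRel F 0 ↔ Squarefree F := by
  simp [SquarefreeRel, Squarefree, sq]

lemma squarefreeRel_congr [CommRing α] {F B B' : α} (h : F ∣ B - B') :
    SquarefreeRel F B ↔ SquarefreeRel F B' := by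
  refine forall_congr' fun x => imp_congr_right fun hx => imp_congr_left ?_
  exact dvd_iff_dvd_of_dvd_sub (((dvd_pow_self x two_ne_zero).trans hx).trans h)

lemma exists_eq_sq_mul_squarefreeRel [CommMonoidWithZero α]
    [StrongNormalizationMonoid α] [WfDvdMonoid α] {F : α} (hF : F ≠ 0) (B : α) :
    ∃ h F' B', normalize h = h ∧ F = h ^ 2 * F' ∧ B = h * B' ∧ SquarefreeRel F' B' := by
  induction F using (wellFounded_dvdNotUnit (α := α)).induction generalizing B with
  | _ F ih =>
    by_cases hrel : SquarefreeRel F B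
    · exact ⟨1, F, B, normalize_one, by simp, by simp, hrel⟩
    obtain ⟨g, hgF, hgB, hg⟩ : ∃ g, g ^ 2 ∣ F ∧ g ∣ B ∧ ¬IsUnit g := by
      simpa [SquarefreeRel] using hrel
    have hgn : normalize g ∣ g := (normalize_associated g).dvd
    obtain ⟨F₁, rfl⟩ := (pow_dvd_pow_of_dvd hgn 2).trans hgF
    obtain ⟨B₁, rfl⟩ := hgn.trans hgB
    have hnot : DvdNotUnit F₁ (normalize g ^ 2 * F₁) :=
      ⟨right_ne_zero_of_mul hF, normalize g ^ 2,
        fun hu => hg ((normalize_associated g).isUnit ((isUnit_pow_iff two_ne_zero).1 hu)),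
        mul_comm _ _⟩
    obtain ⟨h, F', B', hh, rfl, rfl, hrel'⟩ := ih F₁ hnot (right_ne_zero_of_mul hF) B₁
    refine ⟨normalize g * h, F', B', ?_, ?_, (mul_assoc _ _ _).symm, hrel'⟩
    · rw [normalize_mul, normalize_idem, hh]
    · rw [mul_pow, mul_assoc]

lemma dvd_of_sq_mul_eq_of_squarefreeRel [CommMonoidWithZero α] [UniqueFactorizationMonoid α]
    {h₁ h₂ F₁ F₂ B₁ B₂ : α} (h₁0 : h₁ ≠ 0) (hF : h₁ ^ 2 * F₁ = h₂ ^ 2 * F₂)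
    (hB : h₁ * B₁ = h₂ * B₂) (hrel : SquarefreeRel F₁ B₁) : h₂ ∣ h₁ := by
  obtain ⟨a, b, c, hab, rfl, rfl⟩ := UniqueFactorizationMonoid.exists_reduced_factors h₁ h₁0 h₂
  have hc : c ≠ 0 := left_ne_zero_of_mul h₁0
  have hF' : a ^ 2 * F₁ = b ^ 2 * F₂ :=
    mul_left_cancel₀ (pow_ne_zero 2 hc) (by simpa only [mul_pow, mul_assoc] using hF)
  have hB' : a * B₁ = b * B₂ := mul_left_cancel₀ hc (by simpa only [mul_assoc] using hB)
  have hbF : b ^ 2 ∣ F₁ := (hab.symm.pow (m := 2) (n := 2)).dvd_of_dvd_mul_left ⟨F₂, hF'⟩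
  have hbB : b ∣ B₁ := hab.symm.dvd_of_dvd_mul_left ⟨B₂, hB'⟩
  exact mul_dvd_mul_left c (hrel b hbF hbB).dvd

/-- `F` is, up to a unit, an `i`-th power. -/
def IsPowUpToUnit [Monoid α] (i : ℕ) (F : α) : Prop :=
  ∃ G, Associated (G ^ i) F

lemma isPowUpToUnit_pow_mul_iff [CommMonoidWithZero α] [UniqueFactorizationMonoid α] {i : ℕ}
    (hi : i ≠ 0) {h F : α} (hh : h ≠ 0) : IsPowUpToUnit i (h ^ i * F) ↔ IsPowUpToUnit i F := by
  constructor
  · rintro ⟨G, hG⟩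
    obtain ⟨G, rfl⟩ : h ∣ G := (UniqueFactorizationMonoid.pow_dvd_pow_iff_dvd hi).1
      ((dvd_mul_right _ F).trans hG.symm.dvd)
    exact ⟨G, .of_mul_left (mul_pow h G i ▸ hG) (.refl _) (pow_ne_zero i hh)⟩
  · rintro ⟨G, hG⟩
    exact ⟨h * G, mul_pow h G i ▸ hG.mul_left _⟩

end SquarefreeRel

section Counting

variable {k : Type*} [Field k]

/-- The nonzero polynomials of degree `d` in a class `C`. -/
def ofNatDegree (C : Set k[X]) (d : ℕ) : Set k[X] :=
  {F | F ∈ C ∧ F ≠ 0 ∧ F.natDegree = d}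

/-- The pairs `(F, B)` with `F` a nonzero polynomial in `C` whose degree lies in `D`, with
`deg B < N`, and with `F` squarefree relative to `B`. -/
def relPairs (C : Set k[X]) (D : Set ℕ) (N : ℕ) : Set (k[X] × k[X]) :=
  {x | x.1 ∈ C ∧ x.1 ≠ 0 ∧ x.1.natDegree ∈ D ∧ x.2.degree < N ∧ SquarefreeRel x.1 x.2}

lemma exists_monic_sq_mul_squarefreeRel {F : k[X]} (hF : F ≠ 0) (B : k[X]) :
    ∃ h F' B', h.Monic ∧ F = h ^ 2 * F' ∧ B = h * B' ∧ SquarefreeRel F' B' := by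
  obtain ⟨h, F', B', hh, rfl, rfl, hrel⟩ := exists_eq_sq_mul_squarefreeRel hF B
  refine ⟨h, F', B', ?_, rfl, rfl, hrel⟩
  rw [← hh]
  exact monic_normalize (pow_ne_zero_iff two_ne_zero |>.1 <| left_ne_zero_of_mul hF)

lemma eq_of_monic_sq_mul_eq {h h' F F' B B' : k[X]} (hh : h.Monic) (hh' : h'.Monic)
    (hrel : SquarefreeRel F B) (hrel' : SquarefreeRel F' B') (hF : h ^ 2 * F = h' ^ 2 * F')
    (hB : h * B = h' * B') : h = h' ∧ F = F' ∧ B = B' := by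
  obtain rfl : h = h' := eq_of_monic_of_associated hh hh' <| associated_of_dvd_dvd
    (dvd_of_sq_mul_eq_of_squarefreeRel hh'.ne_zero hF.symm hB.symm hrel')
    (dvd_of_sq_mul_eq_of_squarefreeRel hh.ne_zero hF hB hrel)
  exact ⟨rfl, mul_left_cancel₀ (pow_ne_zero 2 hh.ne_zero) hF, mul_left_cancel₀ hh.ne_zero hB⟩

lemma degree_mul_lt_iff {F Q : k[X]} {d e : ℕ} (hF : F ≠ 0) (hd : F.natDegree = d) :
    (F * Q).degree < (d + e : ℕ) ↔ Q.degree < e := by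
  rw [degree_mul, degree_eq_natDegree hF, hd, Nat.cast_add,
    WithBot.add_lt_add_iff_left (WithBot.natCast_ne_bot d)]

lemma ncard_degree_lt (N : ℕ) : {B : k[X] | B.degree < N}.ncard = Nat.card k ^ N := by
  have h : {B : k[X] | B.degree < N} = degreeLT k N := by ext; simp [mem_degreeLT]
  rw [h, ← Nat.card_coe_set_eq]
  exact (Nat.card_congr (degreeLTEquiv k N).toEquiv).trans (by rw [Nat.card_fun, Nat.card_fin])

lemma ncard_monic (d : ℕ) : {h : k[X] | h.Monic ∧ h.natDegree = d}.ncard = Nat.card k ^ d := by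
  rw [← Nat.card_coe_set_eq]
  exact (Nat.card_congr ((monicEquivDegreeLT d).trans (degreeLTEquiv k d).toEquiv)).trans
    (by rw [Nat.card_fun, Nat.card_fin])

lemma ncard_relPairs_singleton (C : Set k[X]) (d e : ℕ) :
    (relPairs C {d} (d + e)).ncard = Nat.card k ^ e * (relPairs C {d} d).ncard := by
  let shift : k[X] × k[X] × k[X] → k[X] × k[X] := fun x => (x.2.1, x.2.2 + x.2.1 * x.1)
  have hinj : Set.InjOn shift ({Q : k[X] | Q.degree < (e : WithBot ℕ)} ×ˢ relPairs C {d} d) := by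
    rintro ⟨Q, F, B⟩ ⟨-, -, hF, hFd, hB, -⟩ ⟨Q', F', B'⟩ ⟨-, -, -, -, hB', -⟩ h
    obtain ⟨rfl, h⟩ := Prod.mk.inj h
    have hBB : B - B' = F * (Q' - Q) := by linear_combination h
    have hdeg : (B - B').degree < F.degree := by
      rw [degree_eq_natDegree hF, hFd]
      exact (degree_sub_le _ _).trans_lt (max_lt hB hB')
    have hB0 : B = B' := sub_eq_zero.1 (eq_zero_of_dvd_of_degree_lt ⟨_, hBB⟩ hdeg)
    have hQ : F = 0 ∨ Q' - Q = 0 := mul_eq_zero.1 (by rw [← hBB, hB0, sub_self])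
    rw [hB0, sub_eq_zero.1 (hQ.resolve_left hF)]
  have himage : shift '' ({Q : k[X] | Q.degree < (e : WithBot ℕ)} ×ˢ relPairs C {d} d) =
      relPairs C {d} (d + e) := by
    ext ⟨F, B⟩
    constructor
    · rintro ⟨⟨Q, F, B⟩, ⟨hQ, hC, hF, hFd, hB, hrel⟩, ⟨⟩⟩
      refine ⟨hC, hF, hFd, ?_, (squarefreeRel_congr ⟨Q, add_sub_cancel_left _ _⟩).2 hrel⟩
      exact (degree_add_le _ _).trans_lt (max_lt (hB.trans_le (by exact_mod_cast d.le_add_right e))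
        ((degree_mul_lt_iff hF hFd).2 hQ))
    · rintro ⟨hC, hF, hFd, hB, hrel⟩
      have hmod : (B % F).degree < d := by
        simpa [degree_eq_natDegree hF, show F.natDegree = d from hFd] using degree_mod_lt B hF
      have hdiv : (B / F).degree < e := by
        rw [← degree_mul_lt_iff hF hFd, ← add_sub_cancel_right (F * (B / F)) (B % F),
          EuclideanDomain.div_add_mod]
        refine (degree_sub_le _ _).trans_lt (max_lt hB (hmod.trans_le ?_))
        exact_mod_cast d.le_add_right e
      have hdvd : F ∣ B % F - B := ⟨-(B / F), by
        linear_combination EuclideanDomain.div_add_mod B F⟩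
      exact ⟨(B / F, F, B % F), ⟨hdiv, hC, hF, hFd, hmod, (squarefreeRel_congr hdvd).2 hrel⟩,
        Prod.ext rfl (EuclideanDomain.mod_add_div B F)⟩
  rw [← himage, hinj.ncard_image, Set.ncard_prod, ncard_degree_lt]

/-- The map `(h, F, B) ↦ (h ^ 2 * F, h * B)`, whose inverse extracts from a pair the largest
`h` obstructing relative squarefreeness. -/
def sqScale (x : k[X] × k[X] × k[X]) : k[X] × k[X] :=
  (x.1 ^ 2 * x.2.1, x.1 * x.2.2)

lemma ofNatDegree_prod_eq_biUnion_sqScale {C : Set k[X]}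
    (hC : ∀ h F : k[X], h.Monic → (h ^ 2 * F ∈ C ↔ F ∈ C)) {d N : ℕ} (hdN : d ≤ N) :
    ofNatDegree C d ×ˢ {B : k[X] | B.degree < N} =
      ⋃ j ∈ (Finset.range (d / 2 + 1) : Set ℕ),
        sqScale '' ({h : k[X] | h.Monic ∧ h.natDegree = j} ×ˢ relPairs C {d - 2 * j} (N - j)) := by
  ext ⟨F, B⟩
  simp only [Set.mem_iUnion, exists_prop, Finset.mem_coe, Finset.mem_range]
  constructor
  · rintro ⟨⟨hFC, hF, hFd⟩, hB⟩
    obtain ⟨h, F, B, hh, rfl, rfl, hrel⟩ := exists_monic_sq_mul_squarefreeRel hF B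
    have hF' : F ≠ 0 := right_ne_zero_of_mul hF
    have hd : 2 * h.natDegree + F.natDegree = d := by
      rw [← hFd, natDegree_mul (pow_ne_zero 2 hh.ne_zero) hF', natDegree_pow]
    refine ⟨h.natDegree, by omega, (h, F, B), ⟨⟨hh, rfl⟩, (hC h F hh).1 hFC, hF', ?_, ?_, hrel⟩,
      rfl⟩
    · exact (Nat.sub_eq_of_eq_add' hd.symm).symm
    · rw [← degree_mul_lt_iff hh.ne_zero rfl, Nat.add_sub_cancel' (by omega)]
      exact hB
  · rintro ⟨j, hj, ⟨h, F, B⟩, ⟨⟨hh, hhj⟩, hFC, hF, hFd, hB, -⟩, ⟨⟩⟩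
    refine ⟨⟨(hC h F hh).2 hFC, mul_ne_zero (pow_ne_zero 2 hh.ne_zero) hF, ?_⟩, ?_⟩
    · rw [natDegree_mul (pow_ne_zero 2 hh.ne_zero) hF, natDegree_pow, hhj,
        show F.natDegree = d - 2 * j from hFd]
      omega
    · simpa [Nat.add_sub_cancel' (show j ≤ N by omega)] using
        (degree_mul_lt_iff hh.ne_zero hhj (e := N - j)).2 hB

lemma ofNatDegree_isPowUpToUnit_of_not_dvd {i d : ℕ} (hd : ¬i ∣ d) :
    ofNatDegree {F : k[X] | IsPowUpToUnit i F} d = ∅ := by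
  refine Set.eq_empty_of_forall_notMem fun F ⟨⟨G, hG⟩, _, hFd⟩ => hd ⟨G.natDegree, ?_⟩
  rw [← hFd, ← natDegree_eq_of_degree_eq (degree_eq_degree_of_associated hG), natDegree_pow]

lemma IsPowUpToUnit.exists_monic {i : ℕ} {F : k[X]} (hF : IsPowUpToUnit i F) (hF0 : F ≠ 0)
    (hi : i ≠ 0) : ∃ (κ : kˣ) (G : k[X]), G.Monic ∧ F = C (κ : k) * G ^ i := by
  obtain ⟨G, hG⟩ := hF
  have hG0 : G ≠ 0 := by
    rintro rfl
    exact hF0 ((associated_zero_iff_eq_zero F).1 (by simpa [hi] using hG.symm))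
  obtain ⟨u, hu⟩ := ((normalize_associated G).pow_pow (n := i)).trans hG
  obtain ⟨κ, hκ, hκu⟩ := Polynomial.isUnit_iff.1 u.isUnit
  exact ⟨hκ.unit, normalize G, monic_normalize hG0, by rw [← hu, ← hκu, mul_comm, hκ.unit_spec]⟩

lemma ncard_ofNatDegree_isPowUpToUnit {i : ℕ} (hi : i ≠ 0) (d : ℕ) :
    (ofNatDegree {F : k[X] | IsPowUpToUnit i F} (i * d)).ncard =
      (Nat.card k - 1) * Nat.card k ^ d := by
  let f : kˣ × k[X] → k[X] := fun x => C (x.1 : k) * x.2 ^ i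
  have hinj : Set.InjOn f (Set.univ ×ˢ {G : k[X] | G.Monic ∧ G.natDegree = d}) := by
    rintro ⟨a, G⟩ ⟨-, hG, -⟩ ⟨b, H⟩ ⟨-, hH, -⟩ h
    dsimp only [f] at h hG hH
    obtain rfl : a = b := Units.ext <| by
      simpa [(hG.pow i).leadingCoeff, (hH.pow i).leadingCoeff] using congrArg leadingCoeff h
    have hpow : G ^ i = H ^ i := mul_left_cancel₀ (C_ne_zero.2 a.ne_zero) h
    rw [show G = H from eq_of_monic_of_associated hG hH <| associated_of_dvd_dvd
      ((IsIntegrallyClosed.pow_dvd_pow_iff hi).1 hpow.dvd)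
      ((IsIntegrallyClosed.pow_dvd_pow_iff hi).1 hpow.symm.dvd)]
  have himage : f '' (Set.univ ×ˢ {G : k[X] | G.Monic ∧ G.natDegree = d}) =
      ofNatDegree {F : k[X] | IsPowUpToUnit i F} (i * d) := by
    ext F
    constructor
    · rintro ⟨⟨a, G⟩, ⟨-, hG, hGd⟩, rfl⟩
      have hC : C (a : k) * G ^ i ≠ 0 := mul_ne_zero (C_ne_zero.2 a.ne_zero) (hG.pow i).ne_zero
      refine ⟨⟨G, (associated_isUnit_mul_right_iff (a.isUnit.map C)).2 (.refl _)⟩, hC, ?_⟩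
      rw [natDegree_C_mul a.ne_zero, natDegree_pow, hGd]
    · rintro ⟨hF, hF0, hFd⟩
      obtain ⟨a, G, hG, rfl⟩ := hF.exists_monic hF0 hi
      rw [natDegree_C_mul a.ne_zero, natDegree_pow] at hFd
      exact ⟨(a, G), ⟨trivial, hG, Nat.eq_of_mul_eq_mul_left (by omega) hFd⟩, rfl⟩
  rw [← himage, hinj.ncard_image, Set.ncard_prod, ncard_monic, Set.ncard_univ, Nat.card_units]

lemma ncard_ofNatDegree_univ (d : ℕ) :
    (ofNatDegree (Set.univ : Set k[X]) d).ncard = (Nat.card k - 1) * Nat.card k ^ d := by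
  have h : {F : k[X] | IsPowUpToUnit 1 F} = Set.univ :=
    Set.eq_univ_of_forall fun F => ⟨F, by rw [pow_one]⟩
  simpa only [h, one_mul] using ncard_ofNatDegree_isPowUpToUnit (k := k) one_ne_zero d

section Finite

variable [Finite k]

lemma finite_degree_lt (N : ℕ) : {B : k[X] | B.degree < N}.Finite := by
  have : Finite (degreeLT k N) := .of_equiv _ (degreeLTEquiv k N).toEquiv.symm
  exact (Set.toFinite (degreeLT k N : Set k[X])).subset fun B hB => mem_degreeLT.2 hB

lemma finite_ofNatDegree (C : Set k[X]) (d : ℕ) : (ofNatDegree C d).Finite :=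
  (finite_degree_lt (d + 1)).subset fun _ hF =>
    (natDegree_lt_iff_degree_lt hF.2.1).1 (hF.2.2 ▸ d.lt_succ_self)

lemma finite_relPairs (C : Set k[X]) {D : Set ℕ} (hD : D.Finite) (N : ℕ) :
    (relPairs C D N).Finite :=
  ((hD.biUnion fun d _ => finite_ofNatDegree C d).prod (finite_degree_lt N)).subset fun _ hx =>
    ⟨Set.mem_biUnion hx.2.2.1 ⟨hx.1, hx.2.1, rfl⟩, hx.2.2.2.1⟩

lemma ncard_relPairs_coe (C : Set k[X]) (D : Finset ℕ) (N : ℕ) :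
    (relPairs C D N).ncard = ∑ d ∈ D, (relPairs C {d} N).ncard := by
  have h : relPairs C D N = ⋃ d ∈ (D : Set ℕ), relPairs C {d} N := by
    ext x
    simp only [Set.mem_iUnion, exists_prop]
    exact ⟨fun ⟨hC, hF, hd, hx⟩ => ⟨_, hd, hC, hF, rfl, hx⟩,
      fun ⟨_, hd, hC, hF, hFd, hx⟩ => ⟨hC, hF, hFd ▸ hd, hx⟩⟩
  rw [h, D.finite_toSet.ncard_biUnion fun d _ => finite_relPairs C (Set.finite_singleton d) N,
    finsum_mem_coe_finset]
  exact fun d _ d' _ hne => Set.disjoint_left.2 fun x hx hx' =>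
    hne (hx.2.2.1.symm.trans hx'.2.2.1)

lemma ncard_ofNatDegree_mul_pow {C : Set k[X]}
    (hC : ∀ h F : k[X], h.Monic → (h ^ 2 * F ∈ C ↔ F ∈ C)) {d N : ℕ} (hdN : d ≤ N) :
    (ofNatDegree C d).ncard * Nat.card k ^ N =
      ∑ j ∈ Finset.range (d / 2 + 1),
        Nat.card k ^ j * (relPairs C {d - 2 * j} (N - j)).ncard := by
  let T : ℕ → Set (k[X] × k[X] × k[X]) := fun j =>
    {h : k[X] | h.Monic ∧ h.natDegree = j} ×ˢ relPairs C {d - 2 * j} (N - j)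
  have hTfin : ∀ j, (T j).Finite := fun j =>
    .prod (Set.finite_of_ncard_ne_zero (by rw [ncard_monic]; exact pow_ne_zero _ Nat.card_pos.ne'))
      (finite_relPairs _ (Set.finite_singleton _) _)
  have hinj : ∀ i j, ∀ x ∈ T i, ∀ y ∈ T j, sqScale x = sqScale y → x = y := by
    rintro i j ⟨h, F, B⟩ ⟨⟨hh, -⟩, -, -, -, -, hrel⟩ ⟨h', F', B'⟩ ⟨⟨hh', -⟩, -, -, -, -, hrel'⟩ heq
    obtain ⟨rfl, rfl, rfl⟩ :=
      eq_of_monic_sq_mul_eq hh hh' hrel hrel' (Prod.mk.inj heq).1 (Prod.mk.inj heq).2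
    rfl
  rw [← ncard_degree_lt, ← Set.ncard_prod, ofNatDegree_prod_eq_biUnion_sqScale hC hdN,
    (Finset.finite_toSet _).ncard_biUnion (fun j _ => (hTfin j).image sqScale),
    finsum_mem_coe_finset]
  · refine Finset.sum_congr rfl fun j _ => ?_
    have hj : Set.InjOn sqScale (T j) := fun x hx y hy => hinj j j x hx y hy
    rw [hj.ncard_image, Set.ncard_prod, ncard_monic]
  · rintro i - j - hne
    refine Set.disjoint_left.2 ?_
    rintro _ ⟨x, hx, rfl⟩ ⟨y, hy, hxy⟩
    exact hne (hx.1.2.symm.trans (hinj j i y hy x hx hxy ▸ hy.1.2))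

lemma ncard_relPairs_add_two {C : Set k[X]}
    (hC : ∀ h F : k[X], h.Monic → (h ^ 2 * F ∈ C ↔ F ∈ C)) (d : ℕ) :
    (relPairs C {d + 2} (d + 2)).ncard + Nat.card k ^ (d + 2) * (ofNatDegree C d).ncard =
      Nat.card k ^ (d + 2) * (ofNatDegree C (d + 2)).ncard := by
  have key : ∀ d, (ofNatDegree C d).ncard * Nat.card k ^ d = ∑ j ∈ Finset.range (d / 2 + 1),
      Nat.card k ^ (2 * j) * (relPairs C {d - 2 * j} (d - 2 * j)).ncard := fun d => by
    rw [ncard_ofNatDegree_mul_pow hC le_rfl]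
    refine Finset.sum_congr rfl fun j hj => ?_
    have hj' : d - j = d - 2 * j + j := by have := Finset.mem_range.1 hj; omega
    rw [hj', ncard_relPairs_singleton, ← mul_assoc, ← pow_add, two_mul]
  have hd := key (d + 2)
  rw [show (d + 2) / 2 + 1 = (d / 2 + 1) + 1 by omega, Finset.sum_range_succ'] at hd
  have hshift : ∀ j, d + 2 - (2 * j + 2) = d - 2 * j := fun j => by omega
  simp only [mul_add_one, hshift, pow_add _ (2 * _), mul_right_comm _ (_ ^ 2), ← Finset.sum_mul,
    ← key, mul_zero, pow_zero, one_mul, Nat.sub_zero] at hd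
  linear_combination -hd

lemma ncard_relPairs_zero {C : Set k[X]}
    (hC : ∀ h F : k[X], h.Monic → (h ^ 2 * F ∈ C ↔ F ∈ C)) :
    (relPairs C {0} 0).ncard = (ofNatDegree C 0).ncard := by
  simpa using (ncard_ofNatDegree_mul_pow hC (Nat.zero_le 0)).symm

lemma ncard_relPairs_one {C : Set k[X]}
    (hC : ∀ h F : k[X], h.Monic → (h ^ 2 * F ∈ C ↔ F ∈ C)) :
    (relPairs C {1} 1).ncard = Nat.card k * (ofNatDegree C 1).ncard := by
  simpa [mul_comm] using (ncard_ofNatDegree_mul_pow hC (le_refl 1)).symm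

lemma ncard_relPairs_range {C : Set k[X]}
    (hC : ∀ h F : k[X], h.Monic → (h ^ 2 * F ∈ C ↔ F ∈ C)) (m : ℕ) :
    (relPairs C (Finset.range (m + 2)) (m + 2)).ncard =
      Nat.card k ^ (m + 2) * ((ofNatDegree C (m + 1)).ncard + (ofNatDegree C m).ncard) := by
  have key : ∀ N, (relPairs C (Finset.range N) N).ncard =
      ∑ d ∈ Finset.range N, Nat.card k ^ (N - d) * (relPairs C {d} d).ncard := fun N => by
    rw [ncard_relPairs_coe]
    refine Finset.sum_congr rfl fun d hd => ?_
    rw [← ncard_relPairs_singleton, Nat.add_sub_cancel' (Finset.mem_range.1 hd).le]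
  rw [key]
  induction m with
  | zero =>
    simp only [Finset.sum_range_succ, Finset.sum_range_zero, ncard_relPairs_zero hC,
      ncard_relPairs_one hC]
    ring
  | succ m ih =>
    have hpow : ∀ d ∈ Finset.range (m + 2), Nat.card k ^ (m + 3 - d) * (relPairs C {d} d).ncard =
        Nat.card k * (Nat.card k ^ (m + 2 - d) * (relPairs C {d} d).ncard) := fun d hd => by
      rw [Nat.succ_sub (Finset.mem_range.1 hd).le, pow_succ']
      ring
    rw [Finset.sum_range_succ, Finset.sum_congr rfl hpow, ← Finset.mul_sum, ih,
      show m + 1 + 2 - (m + 2) = 1 by omega, pow_one]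
    linear_combination Nat.card k * ncard_relPairs_add_two hC m

lemma ncard_relPairs_range_div (m : ℕ) :
    ((relPairs {F : k[X] | IsPowUpToUnit 2 F} (Finset.range (2 * m + 3)) (2 * m + 3)).ncard : ℝ) /
        (relPairs (Set.univ : Set k[X]) (Finset.range (2 * m + 3)) (2 * m + 3)).ncard =
      ((Nat.card k : ℝ) ^ (m + 1))⁻¹ * (1 + (Nat.card k : ℝ)⁻¹)⁻¹ := by
  have hq : 1 < Nat.card k := Finite.one_lt_card
  rw [ncard_relPairs_range fun h F hh => isPowUpToUnit_pow_mul_iff two_ne_zero hh.ne_zero,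
    ncard_relPairs_range fun _ _ _ => Iff.rfl, ncard_ofNatDegree_univ, ncard_ofNatDegree_univ,
    ofNatDegree_isPowUpToUnit_of_not_dvd (by omega : ¬2 ∣ 2 * m + 1),
    show 2 * m + 1 + 1 = 2 * (m + 1) by ring,
    ncard_ofNatDegree_isPowUpToUnit two_ne_zero, Set.ncard_empty]
  have hq1 : ((Nat.card k - 1 : ℕ) : ℝ) ≠ 0 := by exact_mod_cast (Nat.sub_pos_of_lt hq).ne'
  have hq0 : (Nat.card k : ℝ) ≠ 0 := by exact_mod_cast (zero_lt_one.trans hq).ne'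
  push_cast
  field_simp
  ring

lemma ncard_relPairs_singleton_div (m : ℕ) :
    ((relPairs {F : k[X] | IsPowUpToUnit 2 F} {2 * m + 2} (2 * m + 3)).ncard : ℝ) /
        (relPairs (Set.univ : Set k[X]) {2 * m + 2} (2 * m + 3)).ncard =
      ((Nat.card k : ℝ) ^ (m + 1))⁻¹ * (1 + (Nat.card k : ℝ)⁻¹)⁻¹ := by
  have hq : 1 < (Nat.card k : ℝ) := by exact_mod_cast Finite.one_lt_card (α := k)
  have hsq : ((relPairs {F : k[X] | IsPowUpToUnit 2 F} {2 * m + 2} (2 * m + 2)).ncard : ℝ) =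
      (Nat.card k : ℝ) ^ (3 * m + 2) * (Nat.card k - 1) ^ 2 := by
    have h := ncard_relPairs_add_two (C := {F : k[X] | IsPowUpToUnit 2 F})
      (fun h F hh => isPowUpToUnit_pow_mul_iff two_ne_zero hh.ne_zero) (2 * m)
    rw [show 2 * m + 2 = 2 * (m + 1) by ring, ncard_ofNatDegree_isPowUpToUnit two_ne_zero,
      ncard_ofNatDegree_isPowUpToUnit two_ne_zero] at h
    have h' := congrArg (Nat.cast (R := ℝ)) h
    push_cast [Nat.cast_sub Finite.one_lt_card.le] at h'
    linear_combination h'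
  have hall : ((relPairs (Set.univ : Set k[X]) {2 * m + 2} (2 * m + 2)).ncard : ℝ) =
      (Nat.card k : ℝ) ^ (4 * m + 2) * (Nat.card k - 1) ^ 2 * (Nat.card k + 1) := by
    have h := ncard_relPairs_add_two (C := (Set.univ : Set k[X])) (fun _ _ _ => Iff.rfl) (2 * m)
    rw [ncard_ofNatDegree_univ, ncard_ofNatDegree_univ] at h
    have h' := congrArg (Nat.cast (R := ℝ)) h
    push_cast [Nat.cast_sub Finite.one_lt_card.le] at h'
    linear_combination h'
  rw [ncard_relPairs_singleton _ _ 1, ncard_relPairs_singleton _ _ 1]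
  push_cast
  rw [hsq, hall]
  have hq1 : (Nat.card k : ℝ) - 1 ≠ 0 := by linarith
  field_simp
  ring

end Finite
end Counting

section Reduction

variable {R : Type*} [CommRing R] [IsLocalRing R] {ϖ : R}

/-- Reduction of polynomials over a local ring to its residue field. -/
abbrev red : R[X] →+* (IsLocalRing.ResidueField R)[X] :=
  mapRingHom (IsLocalRing.residue R)

lemma red_surjective : Function.Surjective (red (R := R)) :=
  map_surjective _ IsLocalRing.residue_surjective

lemma red_eq_zero_iff (hϖ : IsLocalRing.maximalIdeal R = Ideal.span {ϖ}) {f : R[X]} :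
    red f = 0 ↔ C ϖ ∣ f := by
  rw [← RingHom.mem_ker, ker_mapRingHom, IsLocalRing.ker_residue, hϖ, Ideal.map_span,
    Set.image_singleton, Ideal.mem_span_singleton]

lemma red_C_uniformizer (hϖ : IsLocalRing.maximalIdeal R = Ideal.span {ϖ}) : red (C ϖ) = 0 :=
  (red_eq_zero_iff hϖ).2 dvd_rfl

lemma exists_eq_add_C_mul (hϖ : IsLocalRing.maximalIdeal R = Ideal.span {ϖ}) {f g : R[X]}
    (h : red f = red g) : ∃ E, f = g + C ϖ * E := by
  obtain ⟨E, hE⟩ := (red_eq_zero_iff hϖ).1 (by rw [map_sub, h, sub_self] : red (f - g) = 0)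
  exact ⟨E, eq_add_of_sub_eq' hE⟩

lemma exists_eq_mul_add_C_mul (hϖ : IsLocalRing.maximalIdeal R = Ideal.span {ϖ}) {f P : R[X]}
    (h : red P ∣ red f) : ∃ Q E, f = P * Q + C ϖ * E := by
  obtain ⟨q, hq⟩ := h
  obtain ⟨Q, rfl⟩ := red_surjective q
  exact ⟨Q, exists_eq_add_C_mul hϖ (hq.trans (map_mul red P Q).symm)⟩

lemma span_C_uniformizer_pair_eq_comap (hϖ : IsLocalRing.maximalIdeal R = Ideal.span {ϖ})
    (P : R[X]) : Ideal.span {C ϖ, P} = (Ideal.span {red P}).comap red := by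
  ext f
  rw [Ideal.mem_comap, Ideal.mem_span_singleton, Ideal.mem_span_pair]
  constructor
  · rintro ⟨u, v, rfl⟩
    rw [map_add, map_mul, map_mul, red_C_uniformizer hϖ, mul_zero, zero_add]
    exact dvd_mul_left _ _
  · intro h
    obtain ⟨Q, E, rfl⟩ := exists_eq_mul_add_C_mul hϖ h
    exact ⟨E, Q, by ring⟩

lemma mem_span_C_uniformizer_pair (hϖ : IsLocalRing.maximalIdeal R = Ideal.span {ϖ})
    {P f : R[X]} : f ∈ Ideal.span {C ϖ, P} ↔ red P ∣ red f := by
  rw [span_C_uniformizer_pair_eq_comap hϖ, Ideal.mem_comap, Ideal.mem_span_singleton]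

lemma isPrime_span_C_uniformizer_pair (hϖ : IsLocalRing.maximalIdeal R = Ideal.span {ϖ})
    {P : R[X]} (hP : Irreducible (red P)) : (Ideal.span {C ϖ, P}).IsPrime := by
  rw [span_C_uniformizer_pair_eq_comap hϖ]
  have := (Ideal.span_singleton_prime hP.ne_zero).2 hP.prime
  exact Ideal.comap_isPrime _ _

lemma mem_span_pair_sq {S : Type*} [CommRing S] {a b x : S} :
    x ∈ Ideal.span {a, b} ^ 2 ↔ ∃ u v w, x = u * a ^ 2 + v * (a * b) + w * b ^ 2 := by
  have h : Ideal.span {a, b} ^ 2 = Ideal.span {a ^ 2, a * b, b ^ 2} := by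
    rw [sq, Ideal.span_pair_mul_span_pair, mul_comm b a, ← sq, ← sq]
    congr 1
    simp
  simp only [h, Ideal.mem_span_insert, Ideal.mem_span_singleton']
  constructor
  · rintro ⟨u, _, ⟨v, _, ⟨w, rfl⟩, rfl⟩, rfl⟩
    exact ⟨u, v, w, by ring⟩
  · rintro ⟨u, v, w, rfl⟩
    exact ⟨u, _, ⟨v, _, ⟨w, rfl⟩, rfl⟩, by ring⟩

lemma mem_span_C_X_sq_iff {S : Type*} [CommRing S] {a : S} {g : S[X]} :
    g ∈ Ideal.span {C a, X} ^ 2 ↔ a ^ 2 ∣ g.coeff 0 ∧ a ∣ g.coeff 1 := by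
  rw [mem_span_pair_sq]
  constructor
  · rintro ⟨u, v, w, rfl⟩
    exact ⟨⟨u.coeff 0, by simp [sq, mul_comm (a * a)]⟩, by simp [← mul_assoc, dvd_add, sq]⟩
  · rintro ⟨⟨u, hu⟩, ⟨v, hv⟩⟩
    refine ⟨C u, C v, g.divX.divX, ?_⟩
    conv_lhs => rw [← X_mul_divX_add g, ← X_mul_divX_add g.divX, coeff_divX, zero_add, hu, hv]
    simp only [C_mul, C_pow]
    ring

end Reduction

section Dedekind

lemma mem_of_isIntegralElem {S A : Type*} [CommRing S] [CommRing A] (φ : S →+* A) {I : Ideal S}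
    [I.IsPrime] (hker : RingHom.ker φ ≤ I) {y : A} (hy : φ.IsIntegralElem y) {u w : S} (hu : u ∈ I)
    (huw : φ u * y = φ w) : w ∈ I := by
  obtain ⟨q, hq, hqy⟩ := hy
  have hmem : (q.scaleRoots u).eval w ∈ I := hker <| by
    rw [RingHom.mem_ker, ← eval₂_at_apply, ← huw]
    exact scaleRoots_eval₂_eq_zero φ hqy
  have hlead : Ideal.Quotient.mk I q.leadingCoeff ≠ 0 := by simp [hq.leadingCoeff]
  rw [← Ideal.Quotient.eq_zero_iff_mem, ← eval₂_at_apply, ← eval_map, map_scaleRoots _ _ _ hlead,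
    Ideal.Quotient.eq_zero_iff_mem.2 hu, scaleRoots_zero, (hq.map _).leadingCoeff, one_smul,
    eval_pow, eval_X] at hmem
  exact Ideal.Quotient.eq_zero_iff_mem.1 (eq_zero_of_pow_eq_zero hmem)

variable {R A : Type*} [CommRing R] [CommRing A] [Algebra R A] {ϖ : R}

lemma isIntegralElem_aeval {θ y : A} (hy : IsIntegral R y) :
    (aeval θ : R[X] →ₐ[R] A).toRingHom.IsIntegralElem y := by
  obtain ⟨q, hq, hqy⟩ := hy
  refine ⟨q.map C, hq.map C, ?_⟩
  rw [eval₂_map]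
  convert hqy
  ext r
  simp

lemma aeval_mul_eq_aeval_cross (hreg : IsSMulRegular A ϖ) {T Q E D G : R[X]} {θ y : A}
    (hf : aeval θ (T * Q + C ϖ * E) = 0) (hy : ϖ • y = aeval θ (T * D + C ϖ * G)) :
    aeval θ Q * y = aeval θ (Q * G - E * D) := hreg <| by
  simp only [map_add, map_sub, map_mul, aeval_C, Algebra.smul_def] at hf hy ⊢
  linear_combination aeval θ Q * hy + aeval θ D * hf

variable [IsLocalRing R]

/-- Dedekind's condition on `f`: the ring `R[X] / (f)` is regular at every maximal ideal
containing the uniformizer `ϖ`, i.e. `f` avoids the square of each maximal ideal `(ϖ, P)`. -/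
def DedekindRegular (ϖ : R) (f : R[X]) : Prop :=
  ∀ P : R[X], Irreducible (red P) → f ∉ Ideal.span {C ϖ, P} ^ 2

/-- Induction on `e`: if `f = P ^ (e + 1) * Q + ϖ * E` and `ϖ * y = P ^ e * D + ϖ * G`, then
`Q * y = Q * G - E * D`. Integrality of `y` puts `P * Q * G - E * D` in `(ϖ, P)`, and `E` is not
in `(ϖ, P)` because `f` is not in its square, so `D` is. -/
lemma red_pow_dvd_of_isIntegral (hϖ : IsLocalRing.maximalIdeal R = Ideal.span {ϖ})
    (hreg : IsSMulRegular A ϖ) {f g P : R[X]} {θ y : A}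
    (hker : RingHom.ker (aeval θ : R[X] →ₐ[R] A) = Ideal.span {f}) (hy : IsIntegral R y)
    (hgy : ϖ • y = aeval θ g) (hP : Irreducible (red P)) (hf : f ∉ Ideal.span {C ϖ, P} ^ 2) (e : ℕ)
    (he : red P ^ e ∣ red f) : red P ^ e ∣ red g := by
  have hprime := isPrime_span_C_uniformizer_pair hϖ hP
  have hϖI : C ϖ ∈ Ideal.span {C ϖ, P} := Ideal.subset_span (by simp)
  have hPI : P ∈ Ideal.span {C ϖ, P} := Ideal.subset_span (by simp)
  have hφf : aeval θ f = 0 := RingHom.mem_ker.1 (hker.ge (Ideal.mem_span_singleton_self f))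
  have hlocal (hPf : red P ∣ red f) {u w : R[X]} (hu : u ∈ Ideal.span {C ϖ, P})
      (huw : aeval θ u * y = aeval θ w) : w ∈ Ideal.span {C ϖ, P} := by
    refine mem_of_isIntegralElem (aeval θ : R[X] →ₐ[R] A).toRingHom (hker.le.trans ?_)
      (isIntegralElem_aeval hy) hu huw
    exact (Ideal.span_singleton_le_iff_mem _).2 ((mem_span_C_uniformizer_pair hϖ).2 hPf)
  induction e with
  | zero => exact one_dvd _
  | succ e ih =>
    have hPf : red P ∣ red f := (dvd_pow_self _ e.succ_ne_zero).trans he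
    obtain rfl | he0 := eq_or_ne e 0
    · rw [zero_add, pow_one, ← mem_span_C_uniformizer_pair hϖ]
      exact hlocal hPf hϖI (by rw [aeval_C, ← Algebra.smul_def, hgy])
    obtain ⟨Q, E, hQE⟩ := exists_eq_mul_add_C_mul (f := f) (P := P ^ (e + 1)) hϖ
      (by rwa [map_pow])
    obtain ⟨D, G, rfl⟩ := exists_eq_mul_add_C_mul (f := g) (P := P ^ e) hϖ
      (by simpa only [map_pow] using ih ((pow_dvd_pow _ e.le_succ).trans he))
    have hE : E ∉ Ideal.span {C ϖ, P} := fun hE => hf <| by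
      rw [hQE, sq]
      refine add_mem (Ideal.mul_mem_right _ _ ?_) (Ideal.mul_mem_mul hϖI hE)
      rw [← sq]
      exact Ideal.pow_le_pow_right (by lia) (Ideal.pow_mem_pow hPI (e + 1))
    have hcross : P * Q * G - E * D ∈ Ideal.span {C ϖ, P} := by
      refine hlocal hPf (Ideal.mul_mem_right _ _ hPI) (aeval_mul_eq_aeval_cross hreg ?_ hgy)
      rw [← mul_assoc, ← pow_succ, ← hQE, hφf]
    have hD : D ∈ Ideal.span {C ϖ, P} := by
      have hPQG : P * Q * G ∈ Ideal.span {C ϖ, P} :=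
        Ideal.mul_mem_right _ _ (Ideal.mul_mem_right _ _ hPI)
      have hED : E * D ∈ Ideal.span {C ϖ, P} := by
        simpa only [sub_sub_cancel] using sub_mem hPQG hcross
      exact (hprime.mem_or_mem hED).resolve_left hE
    rw [map_add, map_mul, map_mul, red_C_uniformizer hϖ, zero_mul, add_zero, pow_succ, map_pow]
    exact mul_dvd_mul_left _ ((mem_span_C_uniformizer_pair hϖ).1 hD)

lemma DedekindRegular.red_dvd_of_isIntegral (hϖ : IsLocalRing.maximalIdeal R = Ideal.span {ϖ})
    (hreg : IsSMulRegular A ϖ) {f g : R[X]} {θ y : A} (hf : DedekindRegular ϖ f)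
    (hf0 : red f ≠ 0) (hker : RingHom.ker (aeval θ : R[X] →ₐ[R] A) = Ideal.span {f})
    (hy : IsIntegral R y) (hgy : ϖ • y = aeval θ g) : red f ∣ red g := by
  refine (UniqueFactorizationMonoid.dvd_iff_emultiplicity_le hf0).2 fun P hP => ?_
  obtain ⟨P, rfl⟩ := red_surjective P
  refine emultiplicity_le_emultiplicity_iff.2 fun e he => ?_
  exact red_pow_dvd_of_isIntegral hϖ hreg hker hy hgy hP.irreducible (hf P hP.irreducible) e he

end Dedekind

section FormPoly

variable {R : Type*} [CommRing R]

/-- The dehomogenization `∑ c i * X ^ (n - i)` of the form of degree `n` with coefficients `c`,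
over any base. Its truncations `formPoly i c` satisfy `ζ_{i+1} = θ * formPoly i c`. -/
def formPoly (n : ℕ) (c : ℕ → R) : R[X] :=
  ∑ i ∈ Finset.range (n + 1), C (c i) * X ^ (n - i)

lemma coeff_formPoly (n : ℕ) (c : ℕ → R) (k : ℕ) :
    (formPoly n c).coeff k = if k ≤ n then c (n - k) else 0 := by
  simp only [formPoly, finsetSum_coeff, coeff_C_mul_X_pow]
  split_ifs with hk
  · rw [Finset.sum_eq_single (n - k)]
    · rw [if_pos (Nat.sub_sub_self hk).symm]
    · intro i hi hik
      rw [if_neg (by rw [Finset.mem_range] at hi; lia)]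
    · exact fun h => absurd (Finset.mem_range_succ_iff.2 (n.sub_le k)) h
  · exact Finset.sum_eq_zero fun i _ => if_neg (by lia)

lemma formPoly_succ (n : ℕ) (c : ℕ → R) :
    formPoly (n + 1) c = X * formPoly n c + C (c (n + 1)) := by
  rw [formPoly, Finset.sum_range_succ, formPoly, Finset.mul_sum, Nat.sub_self, pow_zero, mul_one]
  congr 1
  refine Finset.sum_congr rfl fun i hi => ?_
  rw [Nat.succ_sub (Finset.mem_range_succ_iff.1 hi), pow_succ]
  ring

lemma map_formPoly {S : Type*} [CommRing S] (φ : R →+* S) (n : ℕ) (c : ℕ → R) :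
    (formPoly n c).map φ = formPoly n (φ ∘ c) := by
  simp [formPoly, Polynomial.map_sum]

lemma natDegree_formPoly_le (n : ℕ) (c : ℕ → R) : (formPoly n c).natDegree ≤ n :=
  natDegree_sum_le_of_forall_le _ _ fun i _ => (natDegree_C_mul_X_pow_le _ _).trans (n.sub_le i)

lemma natDegree_formPoly {n : ℕ} {c : ℕ → R} (h : c 0 ≠ 0) : (formPoly n c).natDegree = n :=
  natDegree_eq_of_le_of_coeff_ne_zero (natDegree_formPoly_le n c)
    (by rwa [coeff_formPoly, if_pos le_rfl, Nat.sub_self])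

lemma degree_formPoly_sub_lt {i n : ℕ} (hi : i ≤ n) (c : ℕ → R) :
    degree (formPoly n c - X ^ (n - i) * formPoly i c) < (n - i : ℕ) := by
  refine (degree_lt_iff_coeff_zero _ _).2 fun k hk => ?_
  obtain ⟨k, rfl⟩ := Nat.exists_eq_add_of_le' hk
  rw [coeff_sub, coeff_X_pow_mul, coeff_formPoly, coeff_formPoly, sub_eq_zero,
    show n - (k + (n - i)) = i - k by lia]
  exact if_congr (by lia) rfl rfl

/-- Polynomials with `ζ_i = zetaPoly c i (θ)` for `i ≥ 1`, completed by `zetaPoly c 0 = 1`. -/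
def zetaPoly (c : ℕ → R) : ℕ → R[X]
  | 0 => 1
  | i + 1 => X * formPoly i c

/-- The linear combination of the polynomials `zetaPoly c i` whose coefficients are those of `A`;
encoding the coefficients as a polynomial makes `X ^ n * zetaComb c A - A * formPoly n c` small. -/
def zetaComb (c : ℕ → R) : R[X] →ₗ[R] R[X] :=
  lsum fun i => LinearMap.toSpanSingleton R R[X] (zetaPoly c i)

lemma zetaComb_monomial (c : ℕ → R) (i : ℕ) (a : R) :
    zetaComb c (monomial i a) = a • zetaPoly c i := by
  simp [zetaComb, lsum_apply, sum_monomial_index]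

lemma zetaComb_X_pow (c : ℕ → R) (i : ℕ) : zetaComb c (X ^ i) = zetaPoly c i := by
  rw [X_pow_eq_monomial, zetaComb_monomial, one_smul]

lemma map_zetaComb {S : Type*} [CommRing S] (φ : R →+* S) (c : ℕ → R) (A : R[X]) :
    (zetaComb c A).map φ = zetaComb (φ ∘ c) (A.map φ) := by
  induction A using Polynomial.induction_on' with
  | add A B hA hB => simp only [map_add, Polynomial.map_add, hA, hB]
  | monomial i a =>
    rw [map_monomial, zetaComb_monomial, zetaComb_monomial, Polynomial.map_smul]
    cases i <;> simp [zetaPoly, map_formPoly]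

lemma natDegree_zetaPoly_le (c : ℕ → R) (i : ℕ) : (zetaPoly c i).natDegree ≤ i := by
  cases i with
  | zero => simp [zetaPoly]
  | succ i =>
    refine natDegree_mul_le.trans ?_
    rw [add_comm]
    exact add_le_add (natDegree_formPoly_le i c) natDegree_X_le

lemma degree_zetaComb_lt {n : ℕ} (c : ℕ → R) {A : R[X]} (hA : A.degree < n) :
    degree (zetaComb c A) < n := by
  suffices degreeLT R n ≤ (degreeLT R n).comap (zetaComb c) from
    mem_degreeLT.1 (this (mem_degreeLT.2 hA))
  rw [degreeLT_eq_span_X_pow, Submodule.span_le, ← degreeLT_eq_span_X_pow]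
  intro B hB
  obtain ⟨i, hi, rfl⟩ := Finset.mem_image.1 hB
  rw [SetLike.mem_coe, Submodule.mem_comap, mem_degreeLT, zetaComb_X_pow]
  exact degree_le_natDegree.trans_lt
    (mod_cast (natDegree_zetaPoly_le c i).trans_lt (Finset.mem_range.1 hi))

lemma degree_X_pow_mul_zetaPoly_sub_le {i n : ℕ} (c : ℕ → R) (hi : i ≤ n) :
    degree (X ^ n * zetaPoly c i - X ^ i * formPoly n c) ≤ n := by
  cases i with
  | zero =>
    rw [zetaPoly, mul_one, pow_zero, one_mul]
    exact (degree_sub_le _ _).trans (max_le (degree_X_pow_le n)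
      (degree_le_of_natDegree_le (natDegree_formPoly_le n c)))
  | succ i =>
    have h : X ^ n * zetaPoly c (i + 1) - X ^ (i + 1) * formPoly n c =
        -(X ^ (i + 1) * (formPoly n c - X ^ (n - i) * formPoly i c)) := by
      rw [mul_sub, ← mul_assoc, ← pow_add, show i + 1 + (n - i) = n + 1 by lia, zetaPoly]
      ring
    rw [h, degree_neg]
    refine (degree_le_iff_coeff_zero _ _).2 fun m hm => ?_
    have hm : n < m := Nat.cast_lt.1 hm
    rw [coeff_X_pow_mul', if_pos (by lia)]
    refine coeff_eq_zero_of_degree_lt ((degree_formPoly_sub_lt (by lia) c).trans_le ?_)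
    exact_mod_cast (by lia : n - i ≤ m - (i + 1))

lemma degree_X_pow_mul_zetaComb_sub_le {n : ℕ} (c : ℕ → R) {A : R[X]} (hA : A.degree < n) :
    degree (X ^ n * zetaComb c A - A * formPoly n c) ≤ n := by
  let L : R[X] →ₗ[R] R[X] :=
    LinearMap.mulLeft R (X ^ n) ∘ₗ zetaComb c - LinearMap.mulRight R (formPoly n c)
  suffices degreeLT R n ≤ (degreeLE R n).comap L from mem_degreeLE.1 (this (mem_degreeLT.2 hA))
  rw [degreeLT_eq_span_X_pow, Submodule.span_le]
  intro B hB
  obtain ⟨i, hi, rfl⟩ := Finset.mem_image.1 hB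
  rw [SetLike.mem_coe, Submodule.mem_comap, mem_degreeLE]
  simpa [L, zetaComb_X_pow] using
    degree_X_pow_mul_zetaPoly_sub_le c (Finset.mem_range.1 hi).le

/-- If `y = zetaComb c A (θ)`, then `y = r (1 / θ)` with `r` the reflection of
`X ^ n * zetaComb c A - A * formPoly n c`; so divisibility in both charts of `ℙ¹` forces `A = 0`. -/
lemma eq_zero_of_formPoly_dvd_zetaComb [IsDomain R] {n : ℕ} {c : ℕ → R} {A : R[X]}
    (hA : A.degree < n) (hf : formPoly n c ≠ 0) (hdvd : formPoly n c ∣ zetaComb c A)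
    (hdeg : natDegree (X ^ n * zetaComb c A - A * formPoly n c) ≤ (formPoly n c).natDegree) :
    A = 0 := by
  obtain ⟨H, hH⟩ := hdvd
  have hfac : X ^ n * zetaComb c A - A * formPoly n c = formPoly n c * (X ^ n * H - A) := by
    rw [hH]; ring
  obtain ⟨l, hl⟩ : ∃ l, X ^ n * H - A = C l := by
    refine ⟨_, eq_C_of_natDegree_eq_zero ?_⟩
    by_cases h0 : X ^ n * H - A = 0
    · rw [h0, natDegree_zero]
    · rw [hfac, natDegree_mul hf h0] at hdeg
      lia
  rcases n.eq_zero_or_pos with rfl | hn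
  · simpa using hA
  have hAl : A + C l = 0 := by
    refine eq_zero_of_dvd_of_degree_lt (p := X ^ n) ⟨H, by rw [← hl]; ring⟩ ?_
    rw [degree_X_pow]
    exact (degree_add_le _ _).trans_lt (max_lt hA (degree_C_le.trans_lt (mod_cast hn)))
  have hH0 : H = 0 := by
    have : X ^ n * H = 0 := by rw [← hAl, ← hl]; ring
    exact (mul_eq_zero.1 this).resolve_left (pow_ne_zero n X_ne_zero)
  have hzeta : zetaComb c A = A := by
    rw [eq_neg_of_add_eq_zero_left hAl, ← C_neg, ← monomial_zero_left, zetaComb_monomial, zetaPoly,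
      smul_eq_C_mul, mul_one, monomial_zero_left]
  rw [← hzeta, hH, hH0, mul_zero]

lemma eq_zero_of_formPoly_dvd_zetaComb_of_ne_zero [IsDomain R] {n : ℕ} {c : ℕ → R} (hc : c 0 ≠ 0)
    {A : R[X]} (hA : A.degree < n) (hdvd : formPoly n c ∣ zetaComb c A) : A = 0 := by
  have hf := natDegree_formPoly (n := n) hc
  rcases n.eq_zero_or_pos with rfl | hn
  · simpa using hA
  refine eq_zero_of_formPoly_dvd_zetaComb hA (ne_zero_of_natDegree_gt (hf ▸ hn)) hdvd ?_
  rw [hf]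
  exact natDegree_le_of_degree_le (degree_X_pow_mul_zetaComb_sub_le c hA)

lemma exists_zetaComb_eq {k : Type*} [Field k] {n : ℕ} {c : ℕ → k} (hc : c 0 ≠ 0) {G : k[X]}
    (hG : G.degree < n) : ∃ A : k[X], A.degree < n ∧ zetaComb c A = G := by
  have hmaps : ∀ A ∈ degreeLT k n, zetaComb c A ∈ degreeLT k n := fun A hA =>
    mem_degreeLT.2 (degree_zetaComb_lt c (mem_degreeLT.1 hA))
  have hinj : Set.InjOn (zetaComb c) (degreeLT k n) := by
    intro A hA B hB hAB
    refine sub_eq_zero.1 (eq_zero_of_formPoly_dvd_zetaComb_of_ne_zero hc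
      (mem_degreeLT.1 (sub_mem hA hB)) ?_)
    rw [map_sub, hAB, sub_self]
    exact dvd_zero _
  have : FiniteDimensional k (degreeLT k n) := (degreeLTEquiv k n).symm.finiteDimensional
  obtain ⟨A, hA, rfl⟩ := (LinearMap.injOn_iff_surjOn hmaps).1 hinj (mem_degreeLT.2 hG)
  exact ⟨A, mem_degreeLT.1 hA, rfl⟩

end FormPoly

section Order

variable {R K : Type} [CommRing R] [Field K] [Algebra R K] {n : ℕ} {c : ℕ → R}

lemma binPoly_eq_map_formPoly (n : ℕ) (c : ℕ → R) :
    binPoly R K n c = (formPoly n c).map (algebraMap R K) := by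
  simp [binPoly, formPoly, Polynomial.map_sum]

lemma aeval_θF (g : R[X]) :
    aeval (θF R K n c) g = AdjoinRoot.mk (binPoly R K n c) (g.map (algebraMap R K)) :=
  AdjoinRoot.aeval_eq_of_algebra _ g

lemma aeval_θF_zetaPoly_succ (n : ℕ) (c : ℕ → R) (i : ℕ) :
    aeval (θF R K n c) (zetaPoly c (i + 1)) = ζF R K n c (i + 1) := by
  rw [zetaPoly, formPoly, Finset.mul_sum, map_sum, ζF]
  refine Finset.sum_congr rfl fun j hj => ?_
  rw [mul_left_comm, ← pow_succ', Nat.succ_sub (Finset.mem_range_succ_iff.1 hj), map_mul, map_pow,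
    aeval_C, aeval_X]

lemma RFmod_eq_map_degreeLT (hn : 0 < n) (c : ℕ → R) : RFmod R K n c =
    (degreeLT R n).map ((aeval (θF R K n c)).toLinearMap ∘ₗ zetaComb c) := by
  rw [RFmod, degreeLT_eq_span_X_pow, Submodule.map_span, Finset.coe_image, Set.image_image]
  congr 1
  ext x
  simp only [LinearMap.comp_apply, AlgHom.toLinearMap_apply, zetaComb_X_pow, Set.mem_union,
    Set.mem_singleton_iff, Set.mem_image, Finset.coe_range, Set.mem_Iio]
  constructor
  · rintro (rfl | ⟨i, hi1, hin, rfl⟩)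
    · exact ⟨0, hn, map_one _⟩
    · obtain ⟨i, rfl⟩ := Nat.exists_eq_add_of_le' hi1
      exact ⟨i + 1, by lia, aeval_θF_zetaPoly_succ n c i⟩
  · rintro ⟨_ | i, hi, rfl⟩
    · exact Or.inl (map_one _)
    · exact Or.inr ⟨i + 1, by lia, by lia, aeval_θF_zetaPoly_succ n c i⟩

lemma mem_RFmod_iff (hn : 0 < n) {y : KF R K n c} :
    y ∈ RFmod R K n c ↔ ∃ A : R[X], A.degree < n ∧ aeval (θF R K n c) (zetaComb c A) = y := by
  rw [RFmod_eq_map_degreeLT hn, Submodule.mem_map]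
  exact exists_congr fun A => and_congr_left' mem_degreeLT

variable [IsFractionRing R K]

lemma natDegree_binPoly (hc : c 0 ≠ 0) : (binPoly R K n c).natDegree = n := by
  rw [binPoly_eq_map_formPoly,
    natDegree_map_eq_of_injective (FaithfulSMul.algebraMap_injective R K), natDegree_formPoly hc]

variable [IsDomain R]

lemma ker_aeval_root_of_map_eq [IsGCDMonoid R] {f : R[X]} {g : K[X]} (hf : f.IsPrimitive)
    (hfg : f.map (algebraMap R K) = g) :
    RingHom.ker (aeval (AdjoinRoot.root g) : R[X] →ₐ[R] _) = Ideal.span {f} := by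
  ext h
  rw [RingHom.mem_ker, AdjoinRoot.aeval_eq_of_algebra, AdjoinRoot.mk_eq_zero, ← hfg,
    ← hf.dvd_iff_fraction_map_dvd_fraction_map K, Ideal.mem_span_singleton]

lemma exists_smul_mem_RFmod (hn : 0 < n) (hc : c 0 ≠ 0) (y : KF R K n c) :
    ∃ r : R, r ≠ 0 ∧ r • y ∈ RFmod R K n c := by
  have hdeg := natDegree_binPoly (K := K) (n := n) hc
  have hf : binPoly R K n c ≠ 0 := ne_zero_of_natDegree_gt (hdeg ▸ hn)
  obtain ⟨q, rfl⟩ := AdjoinRoot.mk_surjective y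
  obtain ⟨A, hA, hAq⟩ := exists_zetaComb_eq (c := algebraMap R K ∘ c) (by simpa using hc)
    ((EuclideanDomain.mod_lt q hf).trans_eq ((degree_eq_natDegree hf).trans (by rw [hdeg])))
  obtain ⟨r, hr, hrA⟩ := IsLocalization.integerNormalization_spec (nonZeroDivisors R) A
  set B := IsLocalization.integerNormalization (nonZeroDivisors R) A
  have hBA : B.degree ≤ A.degree := by
    rw [← degree_map_eq_of_injective (FaithfulSMul.algebraMap_injective R K) B, hrA]
    exact degree_smul_le r A
  refine ⟨r, nonZeroDivisors.ne_zero hr, (mem_RFmod_iff hn).2 ⟨B, hBA.trans_lt hA, ?_⟩⟩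
  have hq : AdjoinRoot.mk (binPoly R K n c) q = AdjoinRoot.mk _ (q % binPoly R K n c) :=
    AdjoinRoot.mk_eq_mk.2 ⟨q / binPoly R K n c, by
      rw [sub_eq_iff_eq_add, EuclideanDomain.div_add_mod]⟩
  rw [aeval_θF, map_zetaComb, hrA, LinearMap.map_smul_of_tower, hAq, hq,
    ← AdjoinRoot.smul_mk]

end Order

section Infinity

lemma isPrimitive_of_red_ne_zero {R : Type*} [CommRing R] [IsLocalRing R] {f : R[X]}
    (hf : red f ≠ 0) : f.IsPrimitive := by
  refine isPrimitive_iff_isUnit_of_C_dvd.2 fun r ⟨g, hg⟩ => ?_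
  by_contra hr
  refine hf ?_
  rw [hg, map_mul, coe_mapRingHom, map_C,
    (IsLocalRing.residue_eq_zero_iff r).2 ((IsLocalRing.mem_maximalIdeal r).2 hr), C_0, zero_mul]

lemma X_pow_dvd_reflect_iff {R : Type*} [Semiring R] {m n : ℕ} {g : R[X]}
    (hg : g.natDegree ≤ n) : X ^ (n - m) ∣ g.reflect n ↔ g.natDegree ≤ m := by
  rw [X_pow_dvd_iff, natDegree_le_iff_coeff_eq_zero]
  constructor
  · intro h N hN
    by_cases hNn : N ≤ n
    · simpa [coeff_reflect, revAt_le, Nat.sub_sub_self hNn] using h (n - N) (by lia)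
    · exact coeff_eq_zero_of_natDegree_lt (by lia)
  · intro h d hd
    rw [coeff_reflect, revAt_le (by lia)]
    exact h _ (by lia)

lemma aeval_reflect_mul_pow {R A : Type*} [CommRing R] [CommRing A] [Algebra R A] {x y : A}
    (h : x * y = 1) {n : ℕ} {g : R[X]} (hg : g.natDegree ≤ n) :
    aeval y (g.reflect n) * x ^ n = aeval x g :=
  letI : Invertible x := ⟨y, (mul_comm y x).trans h, h⟩
  eval₂_reflect_mul_pow (algebraMap R A) x n g hg

lemma isUnit_root_of_coeff_zero_ne_zero {k : Type*} [Field k] {f : k[X]} (hf : f.coeff 0 ≠ 0) :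
    IsUnit (AdjoinRoot.root f) := by
  have h : AdjoinRoot.root f * AdjoinRoot.mk f f.divX + AdjoinRoot.mk f (C (f.coeff 0)) = 0 := by
    rw [← AdjoinRoot.mk_X, ← map_mul, ← map_add, X_mul_divX_add, AdjoinRoot.mk_self]
  refine isUnit_of_mul_isUnit_left (y := AdjoinRoot.mk f f.divX) ?_
  rw [eq_neg_of_add_eq_zero_left h]
  exact ((isUnit_C.2 hf.isUnit).map _).neg

lemma reflect_formPoly_mem_span_sq_iff {R : Type*} [CommRing R] {n : ℕ} {c : ℕ → R} (hn : 0 < n)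
    {a : R} : (formPoly n c).reflect n ∈ Ideal.span {C a, X} ^ 2 ↔ a ^ 2 ∣ c 0 ∧ a ∣ c 1 := by
  rw [mem_span_C_X_sq_iff, coeff_reflect, coeff_reflect, revAt_le n.zero_le, revAt_le hn,
    coeff_formPoly, coeff_formPoly, if_pos (n.sub_le 0), if_pos (n.sub_le 1),
    Nat.sub_sub_self n.zero_le, Nat.sub_sub_self hn]

variable {R K : Type} [CommRing R] [Field K] [Algebra R K] {n : ℕ} {c : ℕ → R}

lemma exists_algHom_θF_mul_root_eq_one [FaithfulSMul R K] (hc : c 0 ≠ 0) :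
    ∃ ψ : KF R K n c →ₐ[R] AdjoinRoot (((formPoly n c).reflect n).map (algebraMap R K)),
      ψ (θF R K n c) * AdjoinRoot.root _ = 1 := by
  set g := ((formPoly n c).reflect n).map (algebraMap R K)
  have hg : g.coeff 0 ≠ 0 := by
    simpa [g, coeff_reflect, coeff_formPoly, revAt_le] using hc
  obtain ⟨x, hx⟩ := (isUnit_root_of_coeff_zero_ne_zero hg).exists_left_inv
  have hroot : aeval x (formPoly n c) = 0 := by
    rw [← aeval_reflect_mul_pow hx (natDegree_formPoly_le n c), AdjoinRoot.aeval_eq_of_algebra,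
      AdjoinRoot.mk_self, zero_mul]
  refine ⟨AdjoinRoot.liftAlgHom _ (IsScalarTower.toAlgHom R K _) x ?_, ?_⟩
  · rw [binPoly_eq_map_formPoly, eval₂_map]
    exact hroot
  · rwa [θF, AdjoinRoot.liftAlgHom_root]

variable [IsFractionRing R K] [IsDomain R] [IsDiscreteValuationRing R] {ϖ : R}

lemma isSMulRegular_of_irreducible (K : Type*) [Field K] [Algebra R K] [FaithfulSMul R K]
    (A : Type*) [CommRing A] [Algebra K A] [Algebra R A] [IsScalarTower R K A]
    (hϖ : Irreducible ϖ) : IsSMulRegular A ϖ :=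
  have := Module.IsTorsionFree.trans_faithfulSMul R K A
  IsSMulRegular.of_ne_zero hϖ.ne_zero

lemma ker_aeval_θF (hprim : red (formPoly n c) ≠ 0) :
    RingHom.ker (aeval (θF R K n c) : R[X] →ₐ[R] _) = Ideal.span {formPoly n c} :=
  ker_aeval_root_of_map_eq (isPrimitive_of_red_ne_zero hprim)
    (binPoly_eq_map_formPoly n c).symm

lemma aeval_θF_eq_zero_iff (hprim : red (formPoly n c) ≠ 0) {g : R[X]} :
    aeval (θF R K n c) g = 0 ↔ formPoly n c ∣ g := by
  rw [← RingHom.mem_ker, ker_aeval_θF hprim, Ideal.mem_span_singleton]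

lemma natDegree_red_le_of_isIntegral (hϖ : Irreducible ϖ) (hc : c 0 ≠ 0)
    (hprim : red (formPoly n c) ≠ 0)
    (hinf : (formPoly n c).reflect n ∉ Ideal.span {C ϖ, X} ^ 2) {A : R[X]} (hA : A.degree < n)
    {y : KF R K n c} (hy : IsIntegral R y) (hyA : ϖ • y = aeval (θF R K n c) (zetaComb c A)) :
    natDegree (red (X ^ n * zetaComb c A - A * formPoly n c)) ≤ (red (formPoly n c)).natDegree := by
  set f := formPoly n c
  set r := X ^ n * zetaComb c A - A * f
  have hf : f.natDegree ≤ n := natDegree_formPoly_le n c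
  have hr : r.natDegree ≤ n := natDegree_le_of_degree_le (degree_X_pow_mul_zetaComb_sub_le c hA)
  have hredf : (red f).natDegree ≤ n := natDegree_map_le.trans hf
  have hreflect (g : R[X]) : red (g.reflect n) = (red g).reflect n := (reflect_map _ g n).symm
  obtain ⟨ψ, hψ⟩ := exists_algHom_θF_mul_root_eq_one (K := K) (n := n) hc
  have hψf : aeval (ψ (θF R K n c)) f = 0 := by
    rw [aeval_algHom_apply, (aeval_θF_eq_zero_iff hprim).2 dvd_rfl, map_zero]
  have hψr : ϖ • ψ y = aeval (AdjoinRoot.root _) (r.reflect n) := by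
    refine ((IsUnit.of_mul_eq_one _ hψ).pow n).mul_right_cancel ?_
    rw [aeval_reflect_mul_pow hψ hr, map_sub, map_mul, map_mul, hψf, mul_zero, sub_zero, map_pow,
      aeval_X, ← map_smul, hyA, aeval_algHom_apply, mul_comm]
  have hdvd : red X ^ (n - (red f).natDegree) ∣ red (r.reflect n) := by
    refine red_pow_dvd_of_isIntegral hϖ.maximalIdeal_eq (isSMulRegular_of_irreducible K _ hϖ)
      (ker_aeval_root_of_map_eq (isPrimitive_of_red_ne_zero ?_) rfl) (hy.map ψ) hψr ?_ hinf _ ?_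
    · rwa [hreflect, Ne, reflect_eq_zero_iff]
    · simpa using irreducible_X
    · rw [hreflect, coe_mapRingHom, map_X]
      exact (X_pow_dvd_reflect_iff hredf).2 le_rfl
  rw [hreflect, coe_mapRingHom, map_X] at hdvd
  exact (X_pow_dvd_reflect_iff (natDegree_map_le.trans hr)).1 hdvd

lemma mem_RFmod_of_smul_mem (hϖ : Irreducible ϖ) (hn : 0 < n) (hc : c 0 ≠ 0)
    (hprim : red (formPoly n c) ≠ 0) (hfin : DedekindRegular ϖ (formPoly n c))
    (hinf : (formPoly n c).reflect n ∉ Ideal.span {C ϖ, X} ^ 2) {y : KF R K n c}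
    (hy : IsIntegral R y) (hϖy : ϖ • y ∈ RFmod R K n c) : y ∈ RFmod R K n c := by
  obtain ⟨A, hA, hAy⟩ := (mem_RFmod_iff hn).1 hϖy
  have hreg := isSMulRegular_of_irreducible K (KF R K n c) hϖ
  have hdvd := hfin.red_dvd_of_isIntegral hϖ.maximalIdeal_eq hreg hprim (ker_aeval_θF hprim) hy
    hAy.symm
  have hdeg := natDegree_red_le_of_isIntegral hϖ hc hprim hinf hA hy hAy.symm
  simp only [map_sub, map_mul, map_pow, coe_mapRingHom, map_X, map_formPoly, map_zetaComb]
    at hprim hdvd hdeg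
  have hredA : red A = 0 :=
    eq_zero_of_formPoly_dvd_zetaComb (degree_map_le.trans_lt hA) hprim hdvd hdeg
  obtain ⟨B, rfl⟩ := (red_eq_zero_iff hϖ.maximalIdeal_eq).1 hredA
  rw [← smul_eq_C_mul, map_smul, map_smul] at hAy
  refine (mem_RFmod_iff hn).2 ⟨B, ?_, hreg hAy⟩
  rwa [degree_C_mul hϖ.ne_zero] at hA

end Infinity

section Integral

variable {R A : Type*} [CommRing R] [CommRing A] [Algebra R A]

lemma isIntegral_mul_of_aeval_eq_zero {s θ : A} {m : ℕ} {g : R[X]} (hs : IsIntegral R s)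
    (hg : g.degree < m) (h : s * θ ^ m + aeval θ g = 0) : IsIntegral R (s * θ) := by
  set s' : integralClosure R A := ⟨s, hs⟩
  by_cases hs0 : s' = 0
  · rw [show s = 0 from congrArg Subtype.val hs0, zero_mul]
    exact isIntegral_zero
  set q : (integralClosure R A)[X] := C s' * X ^ m + g.map (algebraMap R _)
  have hdeg : degree (g.map (algebraMap R (integralClosure R A))) < degree (C s' * X ^ m) := by
    rw [degree_C_mul_X_pow m hs0]
    exact degree_map_le.trans_lt hg
  have hlead : q.leadingCoeff = s' := by
    rw [leadingCoeff_add_of_degree_lt' hdeg, leadingCoeff_C_mul_X_pow]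
  have hq : aeval θ q = 0 := by
    simpa [q, s', Algebra.algebraMap_ofSubsemiring_apply] using h
  have := isIntegral_leadingCoeff_smul q θ hq
  rw [hlead] at this
  exact isIntegral_trans _ this

lemma isIntegral_of_sq_add_mul_add_eq_zero {x b d : A} (hb : IsIntegral R b) (hd : IsIntegral R d)
    (h : x ^ 2 + b * x + d = 0) : IsIntegral R x := by
  let b' : integralClosure R A := ⟨b, hb⟩
  let d' : integralClosure R A := ⟨d, hd⟩
  refine isIntegral_trans (A := integralClosure R A) x ⟨X ^ 2 + (C b' * X + C d'), ?_, ?_⟩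
  · exact monic_X_pow_add (degree_linear_le.trans_lt (by norm_num))
  · simpa [b', d', Algebra.algebraMap_ofSubsemiring_apply, add_assoc] using h

lemma isIntegral_pow_mul_aeval {s θ : A} (hs : IsIntegral R s) (hsθ : IsIntegral R (s * θ)) {N : ℕ}
    {g : R[X]} (hg : g.natDegree ≤ N) : IsIntegral R (s ^ N * aeval θ g) := by
  rw [aeval_eq_sum_range, Finset.mul_sum]
  refine IsIntegral.sum _ fun i hi => ?_
  have hi : i ≤ N := (Finset.mem_range_succ_iff.1 hi).trans hg
  rw [show s ^ N * g.coeff i • θ ^ i = g.coeff i • (s ^ (N - i) * (s * θ) ^ i) by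
    rw [mul_pow, ← mul_assoc, ← pow_add, Nat.sub_add_cancel hi, mul_smul_comm]]
  exact ((hs.pow _).mul (hsθ.pow _)).smul _

variable {θ : A} {n : ℕ} {c : ℕ → R}

lemma isIntegral_aeval_formPoly_mul {i : ℕ} (hθ : aeval θ (formPoly n c) = 0) (hi : i ≤ n)
    (hs : IsIntegral R (aeval θ (formPoly i c))) : IsIntegral R (aeval θ (formPoly i c) * θ) := by
  refine isIntegral_mul_of_aeval_eq_zero hs (degree_formPoly_sub_lt hi c) ?_
  rw [map_sub, hθ, map_mul, map_pow, aeval_X]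
  ring

lemma isIntegral_aeval_formPoly {i : ℕ} (hθ : aeval θ (formPoly n c) = 0) (hi : i ≤ n) :
    IsIntegral R (aeval θ (formPoly i c)) := by
  induction i with
  | zero => simpa [formPoly] using isIntegral_algebraMap
  | succ i ih =>
    rw [formPoly_succ, map_add, map_mul, aeval_X, aeval_C, mul_comm]
    exact (isIntegral_aeval_formPoly_mul hθ (by lia) (ih (by lia))).add isIntegral_algebraMap

lemma isIntegral_aeval_zetaPoly {i : ℕ} (hθ : aeval θ (formPoly n c) = 0) (hi : i ≤ n) :
    IsIntegral R (aeval θ (zetaPoly c i)) := by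
  cases i with
  | zero => simpa [zetaPoly] using isIntegral_one
  | succ i =>
    rw [zetaPoly, map_mul, aeval_X, mul_comm]
    exact isIntegral_aeval_formPoly_mul hθ (by lia) (isIntegral_aeval_formPoly hθ (by lia))

end Integral

section Maximality

variable {R K : Type} [CommRing R] [Field K] [Algebra R K] {n : ℕ} {c : ℕ → R}

lemma aeval_θF_formPoly (n : ℕ) (c : ℕ → R) : aeval (θF R K n c) (formPoly n c) = 0 := by
  rw [aeval_θF, ← binPoly_eq_map_formPoly, AdjoinRoot.mk_self]

lemma isMaxOrder_iff_forall_isIntegral : IsMaxOrder R K n c ↔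
    ∀ y : KF R K n c, IsIntegral R y → y ∈ RFmod R K n c := by
  refine ⟨fun h y hy => by rwa [h, Subalgebra.mem_toSubmodule, mem_integralClosure_iff],
    fun h => le_antisymm (Submodule.span_le.2 ?_) h⟩
  rintro _ (rfl | ⟨i, hi1, hin, rfl⟩)
  · exact isIntegral_one
  · obtain ⟨i, rfl⟩ := Nat.exists_eq_add_of_le' hi1
    rw [← aeval_θF_zetaPoly_succ]
    exact isIntegral_aeval_zetaPoly (aeval_θF_formPoly n c) (by lia)

variable [IsFractionRing R K] [IsDomain R] [IsDiscreteValuationRing R] {ϖ : R}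

lemma exists_pow_smul_mem_RFmod (hϖ : Irreducible ϖ) (hn : 0 < n) (hc : c 0 ≠ 0) (y : KF R K n c) :
    ∃ m, ϖ ^ m • y ∈ RFmod R K n c := by
  obtain ⟨r, hr, hry⟩ := exists_smul_mem_RFmod hn hc y
  obtain ⟨m, u, rfl⟩ := IsDiscreteValuationRing.eq_unit_mul_pow_irreducible hr hϖ
  refine ⟨m, ?_⟩
  simpa [smul_smul, ← mul_assoc] using Submodule.smul_mem _ (↑u⁻¹ : R) hry

lemma isMaxOrder_of_dedekindRegular (hϖ : Irreducible ϖ) (hn : 0 < n) (hc : c 0 ≠ 0)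
    (hprim : red (formPoly n c) ≠ 0) (hfin : DedekindRegular ϖ (formPoly n c))
    (hinf : (formPoly n c).reflect n ∉ Ideal.span {C ϖ, X} ^ 2) : IsMaxOrder R K n c := by
  refine isMaxOrder_iff_forall_isIntegral.2 fun y hy => ?_
  obtain ⟨m, hm⟩ := exists_pow_smul_mem_RFmod hϖ hn hc y
  induction m with
  | zero => simpa using hm
  | succ m ih =>
    refine ih (mem_RFmod_of_smul_mem hϖ hn hc hprim hfin hinf (hy.smul _) ?_)
    rwa [smul_smul, ← pow_succ']

lemma C_dvd_of_isMaxOrder (hmax : IsMaxOrder R K n c) (hn : 0 < n) (hc : c 0 ≠ 0)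
    (hprim : red (formPoly n c) ≠ 0) {r : R} {B : R[X]} (hB : B.degree < n) {y : KF R K n c}
    (hy : IsIntegral R y) (hyB : r • y = aeval (θF R K n c) (zetaComb c B)) : C r ∣ B := by
  obtain ⟨A, hA, rfl⟩ := (mem_RFmod_iff hn).1 (isMaxOrder_iff_forall_isIntegral.1 hmax y hy)
  refine ⟨A, ?_⟩
  rw [← smul_eq_C_mul, ← sub_eq_zero]
  refine eq_zero_of_formPoly_dvd_zetaComb_of_ne_zero hc ((degree_sub_le _ _).trans_lt
    (max_lt hB ((degree_smul_le r A).trans_lt hA))) ?_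
  rw [← aeval_θF_eq_zero_iff (K := K) hprim, map_sub, map_sub, map_smul, map_smul, hyB, sub_self]

lemma reflect_notMem_of_isMaxOrder (hmax : IsMaxOrder R K n c) (hϖ : Irreducible ϖ) (hn : 2 ≤ n)
    (hc : c 0 ≠ 0) (hprim : red (formPoly n c) ≠ 0) :
    (formPoly n c).reflect n ∉ Ideal.span {C ϖ, X} ^ 2 := by
  rw [reflect_formPoly_mem_span_sq_iff (by lia)]
  rintro ⟨⟨a, ha⟩, ⟨b, hb⟩⟩
  set θ := θF R K n c
  have hζ : aeval θ (zetaPoly c 2) = ϖ ^ 2 • a • θ ^ 2 + ϖ • b • θ := by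
    simp only [zetaPoly, formPoly, Finset.sum_range_succ, Finset.sum_range_zero, zero_add, ha, hb,
      map_add, map_mul, map_pow, aeval_X, aeval_C, Algebra.smul_def]
    ring
  have hx : IsIntegral R (ϖ • a • θ) := by
    refine isIntegral_of_sq_add_mul_add_eq_zero (isIntegral_algebraMap (x := b))
      ((isIntegral_aeval_zetaPoly (i := 2) (aeval_θF_formPoly n c) hn).smul (-a)) ?_
    rw [hζ]
    simp only [Algebra.smul_def, map_pow, map_neg]
    ring
  have hdvd : C ϖ ∣ X := by
    refine C_dvd_of_isMaxOrder hmax (by lia) hc hprim ?_ hx ?_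
    · rw [degree_X]; exact_mod_cast (by lia : 1 < n)
    · have hX : zetaComb c X = C (c 0) * X := by
        rw [← pow_one X, zetaComb_X_pow, zetaPoly, formPoly, Finset.sum_range_one, Nat.sub_zero,
          pow_zero, mul_one, pow_one, mul_comm]
      simp only [hX, ha, map_mul, aeval_C, aeval_X, map_pow, Algebra.smul_def]
      ring
  exact hϖ.not_isUnit (isPrimitive_iff_isUnit_of_C_dvd.1 monic_X.isPrimitive ϖ hdvd)

lemma exists_red_formPoly_eq_C (hprim : red (formPoly n c) ≠ 0) :
    ∃ e ≤ n, ∃ a ≠ 0, red (formPoly e c) = C a := by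
  have hex : ∃ i ≤ n, IsLocalRing.residue R (c i) ≠ 0 := by
    contrapose! hprim
    rw [coe_mapRingHom, map_formPoly, formPoly]
    refine Finset.sum_eq_zero fun i hi => ?_
    rw [Function.comp_apply, hprim i (Finset.mem_range_succ_iff.1 hi), C_0, zero_mul]
  obtain ⟨hen, he⟩ := Nat.find_spec hex
  refine ⟨Nat.find hex, hen, _, he, ?_⟩
  have hlt (i : ℕ) (hi : i < Nat.find hex) : IsLocalRing.residue R (c i) = 0 := by
    have := Nat.find_min hex hi
    grind
  rw [coe_mapRingHom, map_formPoly, formPoly, Finset.sum_range_succ, Nat.sub_self, pow_zero,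
    mul_one, Finset.sum_eq_zero fun i hi => ?_, zero_add, Function.comp_apply]
  rw [Function.comp_apply, hlt i (Finset.mem_range.1 hi), C_0, zero_mul]

lemma red_dvd_of_isMaxOrder (hmax : IsMaxOrder R K n c) (hϖ : Irreducible ϖ) (hn : 0 < n)
    (hprim : red (formPoly n c) ≠ 0) {y : KF R K n c} (hy : IsIntegral R y) {g : R[X]}
    (hyg : ϖ • y = aeval (θF R K n c) g) : red (formPoly n c) ∣ red g := by
  obtain ⟨A, -, rfl⟩ := (mem_RFmod_iff hn).1 (isMaxOrder_iff_forall_isIntegral.1 hmax y hy)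
  have hdvd : formPoly n c ∣ g - C ϖ * zetaComb c A := by
    rw [← aeval_θF_eq_zero_iff (K := K) hprim, map_sub, ← hyg, ← smul_eq_C_mul, map_smul, sub_self]
  simpa only [map_sub, map_mul, red_C_uniformizer hϖ.maximalIdeal_eq, zero_mul, sub_zero] using
    _root_.map_dvd red hdvd

lemma dedekindRegular_of_isMaxOrder (hmax : IsMaxOrder R K n c) (hϖ : Irreducible ϖ) (hn : 0 < n)
    (hprim : red (formPoly n c) ≠ 0) : DedekindRegular ϖ (formPoly n c) := by
  intro P hP hmem
  obtain ⟨u, v, w, h⟩ := mem_span_pair_sq.1 hmem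
  obtain ⟨e, he, a, ha, hρ⟩ := exists_red_formPoly_eq_C hprim
  set θ := θF R K n c
  set ρ := formPoly e c
  have hf : aeval θ (formPoly n c) = 0 := aeval_θF_formPoly n c
  have hρint : IsIntegral R (aeval θ ρ) := isIntegral_aeval_formPoly hf he
  have hρθint := isIntegral_aeval_formPoly_mul hf he hρint
  set N := max v.natDegree (u * w).natDegree
  have hreg := isSMulRegular_of_irreducible K (KF R K n c) hϖ
  -- For `f = u * ϖ ^ 2 + v * ϖ * P + w * P ^ 2`, the element `P * w / ϖ` is a root of
  -- `Y ^ 2 + v * Y + u * w`. Its coefficients are integral after scaling by powers of `ρ`, which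
  -- is a unit modulo `ϖ`.
  obtain ⟨y, hy⟩ : ∃ y, ϖ • y = aeval θ (ρ ^ N * P * w) := by
    refine ⟨(algebraMap R K ϖ)⁻¹ • aeval θ (ρ ^ N * P * w), ?_⟩
    rw [← algebraMap_smul K ϖ, smul_inv_smul₀]
    simpa using hϖ.ne_zero
  have hquad : y ^ 2 + aeval θ ρ ^ N * aeval θ v * y +
      aeval θ ρ ^ N * (aeval θ ρ ^ N * aeval θ (u * w)) = 0 := by
    refine hreg (hreg ?_)
    rw [h] at hf
    simp only [map_add, map_mul, map_pow, aeval_C, Algebra.smul_def] at hf hy ⊢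
    linear_combination (algebraMap R _ ϖ * y + aeval θ ρ ^ N * aeval θ P * aeval θ w +
      algebraMap R _ ϖ * aeval θ ρ ^ N * aeval θ v) * hy + (aeval θ ρ ^ N) ^ 2 * aeval θ w * hf
  have hdvd : red (formPoly n c) ∣ red (ρ ^ N * P * w) :=
    red_dvd_of_isMaxOrder hmax hϖ hn hprim (isIntegral_of_sq_add_mul_add_eq_zero
      (isIntegral_pow_mul_aeval hρint hρθint (le_max_left _ _))
      ((hρint.pow N).mul (isIntegral_pow_mul_aeval hρint hρθint (le_max_right _ _))) hquad) hy
  have hredf : red (formPoly n c) = red P * (red P * red w) := by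
    simp only [h, map_add, map_mul, map_pow, red_C_uniformizer hϖ.maximalIdeal_eq]
    ring
  have hPw : red P * red w ≠ 0 := right_ne_zero_of_mul (hredf ▸ hprim)
  rw [mul_assoc, map_mul, map_pow, hρ, map_mul, ← C_pow, hredf] at hdvd
  have := (isUnit_C.2 (pow_ne_zero N ha).isUnit).dvd_mul_left.1 hdvd
  exact hP.not_isUnit (isUnit_of_dvd_one ((mul_dvd_mul_iff_right hPw).1 (by rwa [one_mul])))

theorem isMaxOrder_iff (hϖ : Irreducible ϖ) (hn : 2 ≤ n) (hc : c 0 ≠ 0)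
    (hprim : red (formPoly n c) ≠ 0) : IsMaxOrder R K n c ↔
      DedekindRegular ϖ (formPoly n c) ∧ (formPoly n c).reflect n ∉ Ideal.span {C ϖ, X} ^ 2 :=
  ⟨fun h => ⟨dedekindRegular_of_isMaxOrder h hϖ (by lia) hprim,
    reflect_notMem_of_isMaxOrder h hϖ hn hc hprim⟩,
    fun h => isMaxOrder_of_dedekindRegular hϖ (by lia) hc hprim h.1 h.2⟩

lemma isReduced_of_isMaxOrder (hmax : IsMaxOrder R K n c) (hn : 0 < n) (hc : c 0 ≠ 0)
    (hprim : red (formPoly n c) ≠ 0) : IsReduced (KF R K n c) := by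
  obtain ⟨ϖ, hϖ⟩ := IsDiscreteValuationRing.exists_irreducible R
  refine ⟨fun y hy => ?_⟩
  obtain ⟨m, hm⟩ := exists_pow_smul_mem_RFmod hϖ hn hc y
  obtain ⟨A, hA, hAy⟩ := (mem_RFmod_iff hn).1 hm
  have hdvd (k : ℕ) : C ϖ ^ k ∣ A := by
    obtain ⟨N, hN⟩ := hy.smul ((algebraMap R K (ϖ ^ k))⁻¹ • algebraMap R K (ϖ ^ m))
    have hint : IsIntegral R (((algebraMap R K (ϖ ^ k))⁻¹ • algebraMap R K (ϖ ^ m)) • y) :=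
      .of_pow N.succ_pos (by rw [pow_succ, hN, zero_mul]; exact isIntegral_zero)
    rw [← C_pow]
    refine C_dvd_of_isMaxOrder hmax hn hc hprim hA hint ?_
    rw [hAy, smul_assoc, algebraMap_smul, ← algebraMap_smul K (ϖ ^ k), smul_inv_smul₀]
    simpa using fun h => absurd h hϖ.ne_zero
  have hA0 : A = 0 := by
    by_contra hA0
    obtain ⟨k, hk⟩ := FiniteMultiplicity.of_not_isUnit (isUnit_C.not.2 hϖ.not_isUnit) hA0
    exact hk (hdvd _)
  rw [hA0, map_zero, map_zero] at hAy
  have hreg := (isSMulRegular_of_irreducible K (KF R K n c) hϖ).pow m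
  exact hreg (hAy.symm.trans (smul_zero _).symm)

lemma separable_binPoly_of_isMaxOrder [PerfectField K] (hmax : IsMaxOrder R K n c) (hn : 0 < n)
    (hc : c 0 ≠ 0) (hprim : red (formPoly n c) ≠ 0) : (binPoly R K n c).Separable := by
  have hne : binPoly R K n c ≠ 0 :=
    ne_zero_of_natDegree_gt (hn.trans_eq (natDegree_binPoly hc).symm)
  rw [PerfectField.separable_iff_squarefree, ← isRadical_iff_squarefree_of_ne_zero hne,
    isRadical_iff_span_singleton, Ideal.isRadical_iff_quotient_reduced]
  exact isReduced_of_isMaxOrder hmax hn hc hprim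

end Maximality

section Digits

lemma squarefreeRel_iff_irreducible {α : Type*} [CommMonoidWithZero α]
    [WfDvdMonoid α] {F B : α} (hF : F ≠ 0) :
    SquarefreeRel F B ↔ ∀ P, Irreducible P → P ^ 2 ∣ F → ¬P ∣ B := by
  refine ⟨fun h P hP hPF hPB => hP.not_isUnit (h P hPF hPB), fun h g hgF hgB => ?_⟩
  by_contra hg
  obtain ⟨P, hP, hPg⟩ := WfDvdMonoid.exists_irreducible_factor hg <| by
    rintro rfl
    exact hF (zero_dvd_iff.1 (by simpa using hgF))
  exact h P hP ((pow_dvd_pow_of_dvd hPg 2).trans hgF) (hPg.trans hgB)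

variable {R : Type*} [CommRing R] [IsDomain R] [IsDiscreteValuationRing R] {ϖ : R}

lemma C_uniformizer_mul_mem_span_sq_iff (hϖ : Irreducible ϖ) {P B : R[X]} (hP : red P ≠ 0) :
    C ϖ * B ∈ Ideal.span {C ϖ, P} ^ 2 ↔ B ∈ Ideal.span {C ϖ, P} := by
  have hm := hϖ.maximalIdeal_eq
  constructor
  · rw [mem_span_pair_sq, Ideal.mem_span_pair]
    rintro ⟨u, v, w, h⟩
    obtain ⟨w, rfl⟩ : C ϖ ∣ w := by
      have hw := congrArg red h
      simp only [map_add, map_mul, map_pow, red_C_uniformizer hm] at hw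
      rw [← red_eq_zero_iff hm]
      exact (mul_eq_zero.1 (by simpa using hw)).resolve_right (pow_ne_zero 2 hP)
    exact ⟨u, v + w * P, mul_left_cancel₀ (C_ne_zero.2 hϖ.ne_zero) (by linear_combination -h)⟩
  · intro hB
    rw [sq]
    exact Ideal.mul_mem_mul (Ideal.subset_span (by simp)) hB

lemma sq_mul_add_mem_span_sq_iff (hϖ : Irreducible ϖ) {h s B P : R[X]}
    (hP : Irreducible (red P)) (hs : Squarefree (red s)) :
    h ^ 2 * s + C ϖ * B ∈ Ideal.span {C ϖ, P} ^ 2 ↔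
      red P ^ 2 ∣ red (h ^ 2 * s) ∧ red P ∣ red B := by
  have hm := hϖ.maximalIdeal_eq
  have hmem : red P ^ 2 ∣ red (h ^ 2 * s) → h ^ 2 * s ∈ Ideal.span {C ϖ, P} ^ 2 := by
    intro hdvd
    refine Ideal.mul_mem_right _ _ (Ideal.pow_mem_pow ((mem_span_C_uniformizer_pair hm).2 ?_) 2)
    by_contra hPh
    rw [map_mul, map_pow] at hdvd
    have hPs := ((hP.coprime_iff_not_dvd.2 hPh).pow (m := 2) (n := 2)).dvd_of_dvd_mul_left hdvd
    exact hP.not_isUnit (hs _ (sq (red P) ▸ hPs))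
  rw [← mem_span_C_uniformizer_pair hm, ← C_uniformizer_mul_mem_span_sq_iff hϖ hP.ne_zero]
  constructor
  · intro hf
    have hdvd : red P ^ 2 ∣ red (h ^ 2 * s) := by
      obtain ⟨u, v, w, huvw⟩ := mem_span_pair_sq.1 hf
      refine ⟨red w, ?_⟩
      simpa [red_C_uniformizer hm, -coe_mapRingHom, mul_comm] using congrArg red huvw
    exact ⟨hdvd, (Ideal.add_mem_iff_right _ (hmem hdvd)).1 hf⟩
  · rintro ⟨hdvd, hB⟩
    exact Ideal.add_mem _ (hmem hdvd) hB

lemma dedekindRegular_sq_mul_add_iff (hϖ : Irreducible ϖ) {h s : R[X]}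
    (h0 : red (h ^ 2 * s) ≠ 0) (hs : Squarefree (red s)) (B : R[X]) :
    DedekindRegular ϖ (h ^ 2 * s + C ϖ * B) ↔ SquarefreeRel (red (h ^ 2 * s)) (red B) := by
  rw [squarefreeRel_iff_irreducible h0, red_surjective.forall]
  refine forall_congr' fun P => forall_congr' fun hP => ?_
  rw [sq_mul_add_mem_span_sq_iff hϖ hP hs, not_and]

lemma exists_red_eq_degree_eq (H : (IsLocalRing.ResidueField R)[X]) :
    ∃ L : R[X], red L = H ∧ L.degree = H.degree :=
  exists_degree_eq_of_mem_lifts ((mem_lifts H).2 (red_surjective H))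

lemma exists_lift_dedekindRegular_iff (hϖ : Irreducible ϖ)
    (H : (IsLocalRing.ResidueField R)[X]) :
    ∃ L : R[X], red L = H ∧ L.degree = H.degree ∧
      (H ≠ 0 → ∀ B, DedekindRegular ϖ (L + C ϖ * B) ↔ SquarefreeRel H (red B)) := by
  rcases eq_or_ne H 0 with rfl | hH
  · exact ⟨0, map_zero _, by rw [degree_zero, degree_zero], fun h => absurd rfl h⟩
  obtain ⟨h, s, B, -, hhs, hB, hs⟩ := exists_eq_sq_mul_squarefreeRel hH 0
  have hh0 : h ≠ 0 := by
    rintro rfl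
    exact hH (by simpa using hhs)
  obtain rfl := (mul_eq_zero.1 hB.symm).resolve_left hh0
  obtain ⟨h, rfl, hh⟩ := exists_red_eq_degree_eq h
  obtain ⟨s, rfl, hsdeg⟩ := exists_red_eq_degree_eq s
  obtain rfl : H = red (h ^ 2 * s) := hhs.trans (by rw [map_mul, map_pow])
  refine ⟨h ^ 2 * s, rfl, ?_,
    fun hH => dedekindRegular_sq_mul_add_iff hϖ hH (squarefreeRel_zero_iff.1 hs)⟩
  rw [map_mul, map_pow, degree_mul, degree_mul, degree_pow, degree_pow, hh, hsdeg]

/-- A lift of `H` of the same degree, chosen so that Dedekind's condition on `digitLift H + ϖ B`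
only depends on the reduction of `B`. -/
def digitLift (hϖ : Irreducible ϖ) (H : (IsLocalRing.ResidueField R)[X]) : R[X] :=
  (exists_lift_dedekindRegular_iff hϖ H).choose

lemma red_digitLift (hϖ : Irreducible ϖ) (H : (IsLocalRing.ResidueField R)[X]) :
    red (digitLift hϖ H) = H :=
  (exists_lift_dedekindRegular_iff hϖ H).choose_spec.1

lemma degree_digitLift (hϖ : Irreducible ϖ) (H : (IsLocalRing.ResidueField R)[X]) :
    (digitLift hϖ H).degree = H.degree :=
  (exists_lift_dedekindRegular_iff hϖ H).choose_spec.2.1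

lemma dedekindRegular_digitLift_add_iff (hϖ : Irreducible ϖ)
    {H : (IsLocalRing.ResidueField R)[X]} (hH : H ≠ 0) (B : R[X]) :
    DedekindRegular ϖ (digitLift hϖ H + C ϖ * B) ↔ SquarefreeRel H (red B) :=
  (exists_lift_dedekindRegular_iff hϖ H).choose_spec.2.2 hH B

lemma exists_eq_digitLift_add (hϖ : Irreducible ϖ) (g : R[X]) :
    ∃ B, g = digitLift hϖ (red g) + C ϖ * B :=
  exists_eq_add_C_mul hϖ.maximalIdeal_eq (red_digitLift hϖ (red g)).symm

/-- The two leading `ϖ`-adic digits `(F, B)` of `g`, where `g ≡ L(F) + ϖ B` modulo `ϖ ^ 2` and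
`L` is `digitLift`. The second digit is shifted by `c % F`, so that it has small degree even
though it decides Dedekind's condition on `g + ϖ C` for `C` a lift of `c` of large degree. -/
def digits (hϖ : Irreducible ϖ) (c : (IsLocalRing.ResidueField R)[X]) (g : R[X]) :
    (IsLocalRing.ResidueField R)[X] × (IsLocalRing.ResidueField R)[X] :=
  (red g, red (exists_eq_digitLift_add hϖ g).choose + c % red g)

lemma digits_digitLift_add (hϖ : Irreducible ϖ) (c H : (IsLocalRing.ResidueField R)[X])
    (B : R[X]) : digits hϖ c (digitLift hϖ H + C ϖ * B) = (H, red B + c % H) := by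
  have hred : red (digitLift hϖ H + C ϖ * B) = H := by
    rw [map_add, map_mul, red_digitLift, red_C_uniformizer hϖ.maximalIdeal_eq, zero_mul, add_zero]
  rw [digits]
  have hE := (exists_eq_digitLift_add hϖ (digitLift hϖ H + C ϖ * B)).choose_spec
  generalize (exists_eq_digitLift_add hϖ (digitLift hϖ H + C ϖ * B)).choose = E at hE ⊢
  rw [hred, add_right_inj, mul_right_inj' (C_ne_zero.2 hϖ.ne_zero)] at hE
  rw [hred, hE]

lemma digits_eq_iff (hϖ : Irreducible ϖ) {c : (IsLocalRing.ResidueField R)[X]} {g g' : R[X]} :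
    digits hϖ c g = digits hϖ c g' ↔ C ϖ ^ 2 ∣ g - g' := by
  have hm := hϖ.maximalIdeal_eq
  obtain ⟨B, hB⟩ := exists_eq_digitLift_add hϖ g
  obtain ⟨B', hB'⟩ := exists_eq_digitLift_add hϖ g'
  have hdig : digits hϖ c g = digits hϖ c g' ↔ red g = red g' ∧ red B = red B' := by
    rw [hB, hB', digits_digitLift_add, digits_digitLift_add, Prod.mk.injEq, ← hB, ← hB']
    exact and_congr_right fun h => by rw [h, add_left_inj]
  rw [hdig]
  constructor
  · rintro ⟨h, hBB⟩
    obtain ⟨E, rfl⟩ := exists_eq_add_C_mul hm hBB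
    exact ⟨E, by rw [hB, h]; linear_combination -hB'⟩
  · rintro ⟨E, hE⟩
    have h : red g = red g' := by
      rw [← sub_eq_zero, ← map_sub, red_eq_zero_iff hm, hE]
      exact (dvd_pow_self _ two_ne_zero).mul_right E
    refine ⟨h, ?_⟩
    rw [← sub_eq_zero, ← map_sub, red_eq_zero_iff hm]
    refine ⟨E, mul_left_cancel₀ (C_ne_zero.2 hϖ.ne_zero) ?_⟩
    rw [h] at hB
    linear_combination hE - hB + hB'

lemma dedekindRegular_add_iff_digits (hϖ : Irreducible ϖ) {g : R[X]} (hg : red g ≠ 0) (G : R[X]) :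
    DedekindRegular ϖ (g + C ϖ * G) ↔
      SquarefreeRel (digits hϖ (red G) g).1 (digits hϖ (red G) g).2 := by
  obtain ⟨B, hB⟩ := exists_eq_digitLift_add hϖ g
  have hdvd : red g ∣ red (B + G) - (red B + red G % red g) :=
    ⟨red G / red g, by rw [map_add, EuclideanDomain.mod_eq_sub_mul_div]; ring⟩
  have hdig : digits hϖ (red G) g = (red g, red B + red G % red g) := by
    conv_lhs => rw [hB, digits_digitLift_add]
  rw [hdig, ← squarefreeRel_congr hdvd, ← dedekindRegular_digitLift_add_iff hϖ hg, mul_add,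
    ← add_assoc, ← hB]

lemma degree_digits_snd_lt (hϖ : Irreducible ϖ) (c : (IsLocalRing.ResidueField R)[X])
    {n : ℕ} {g : R[X]} (hdeg : g.degree < n) (hg : red g ≠ 0) :
    degree (digits hϖ c g).2 < n := by
  have hred : degree (red g) < n := degree_map_le.trans_lt hdeg
  obtain ⟨B, hB⟩ := exists_eq_digitLift_add hϖ g
  have hBn : B.degree < n := by
    rw [← degree_C_mul hϖ.ne_zero, ← sub_eq_of_eq_add' hB]
    exact (degree_sub_le _ _).trans_lt (max_lt hdeg (by rwa [degree_digitLift]))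
  rw [hB, digits_digitLift_add]
  exact (degree_add_le _ _).trans_lt
    (max_lt (degree_map_le.trans_lt hBn) ((degree_mod_lt c hg).trans hred))

lemma exists_digits_eq (hϖ : Irreducible ϖ) (c : (IsLocalRing.ResidueField R)[X])
    {n : ℕ} {H B : (IsLocalRing.ResidueField R)[X]} (hH0 : H ≠ 0) (hH : H.degree < n)
    (hB : B.degree < n) : ∃ g : R[X], g.degree < n ∧ digits hϖ c g = (H, B) := by
  obtain ⟨b, hb, hbdeg⟩ := exists_red_eq_degree_eq (B - c % H)
  refine ⟨digitLift hϖ H + C ϖ * b, ?_, by rw [digits_digitLift_add, hb, sub_add_cancel]⟩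
  refine (degree_add_le _ _).trans_lt (max_lt (by rwa [degree_digitLift]) ?_)
  rw [degree_C_mul hϖ.ne_zero, hbdeg]
  exact (degree_sub_le _ _).trans_lt (max_lt hB ((degree_mod_lt c hH0).trans hH))

end Digits

section Measure

lemma measure_preimage_eq_ncard_mul {G X : Type*} [AddGroup G] [MeasurableSpace G]
    [MeasurableAdd G] {μ : Measure G} [μ.IsAddLeftInvariant] {H : AddSubgroup G}
    (hH : MeasurableSet (H : Set G)) {f : G → X} (hf : ∀ a b, f a = f b ↔ -a + b ∈ H) {S : Set X}
    (hS : S.Finite) (hSf : S ⊆ Set.range f) : μ (f ⁻¹' S) = S.ncard * μ H := by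
  have hfib : ∀ a, f ⁻¹' {f a} = (-a + ·) ⁻¹' (H : Set G) := fun a => by
    ext b
    rw [Set.mem_preimage, Set.mem_singleton_iff, eq_comm, hf, Set.mem_preimage, SetLike.mem_coe]
  have hμ : ∀ x ∈ S, MeasurableSet (f ⁻¹' {x}) ∧ μ (f ⁻¹' {x}) = μ H := by
    intro x hx
    obtain ⟨a, rfl⟩ := hSf hx
    rw [hfib]
    exact ⟨measurable_const_add _ hH, measure_preimage_add _ _ _⟩
  lift S to Finset X using hS
  rw [← Set.biUnion_preimage_singleton, Finset.set_biUnion_coe, measure_biUnion_finset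
    (fun x _ y _ hxy => (Set.disjoint_singleton.2 hxy).preimage f) fun x hx => (hμ x hx).1,
    Finset.sum_congr rfl fun x hx => (hμ x hx).2, Finset.sum_const, nsmul_eq_mul,
    Set.ncard_coe_finset]

variable {p : ℕ} [Fact p.Prime] {n : ℕ}

instance : (haarP p n).IsAddHaarMeasure := by
  unfold haarP
  infer_instance

lemma densIn_preimage {X : Type*} (H : OpenAddSubgroup (Fin n → ℤ_[p])) {f : (Fin n → ℤ_[p]) → X}
    (hf : ∀ v w, f v = f w ↔ -v + w ∈ H) {S T : Set X} (hST : S ⊆ T) (hT : T.Finite)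
    (hTf : T ⊆ Set.range f) :
    densIn p n (f ⁻¹' S) (f ⁻¹' T) = (S.ncard : ℝ) / T.ncard := by
  have hm : MeasurableSet ((H : AddSubgroup (Fin n → ℤ_[p])) : Set (Fin n → ℤ_[p])) :=
    H.isOpen.measurableSet
  have hpos : (haarP p n (H : AddSubgroup (Fin n → ℤ_[p]))).toReal ≠ 0 :=
    ENNReal.toReal_ne_zero.2 ⟨(H.isOpen.measure_pos _ ⟨0, H.zero_mem⟩).ne',
      ((measure_mono (Set.subset_univ _)).trans_lt isCompact_univ.measure_lt_top).ne⟩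
  rw [densIn, measure_preimage_eq_ncard_mul hm hf (hT.subset hST) (hST.trans hTf),
    measure_preimage_eq_ncard_mul hm hf hT hTf, ENNReal.toReal_mul, ENNReal.toReal_mul,
    mul_div_mul_right _ _ hpos, ENNReal.toReal_natCast, ENNReal.toReal_natCast]

lemma isOpen_span_pow (m : ℕ) :
    IsOpen ((Ideal.span {(p : ℤ_[p]) ^ m} : Ideal ℤ_[p]) : Set ℤ_[p]) := by
  convert IsUltrametricDist.isOpen_closedBall (0 : ℤ_[p])
    (zpow_ne_zero (-(m : ℤ)) (Nat.cast_ne_zero.2 (Fact.out : p.Prime).ne_zero)) using 1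
  ext a
  rw [mem_closedBall_zero_iff, PadicInt.norm_le_pow_iff_mem_span_pow, SetLike.mem_coe]

/-- The open subgroup `(p ^ m ℤ_p) ^ n` of `ℤ_p ^ n`. -/
def powSubgroup (p n m : ℕ) [Fact p.Prime] : OpenAddSubgroup (Fin n → ℤ_[p]) where
  toAddSubgroup := AddSubgroup.pi Set.univ fun _ => (Ideal.span {(p : ℤ_[p]) ^ m}).toAddSubgroup
  isOpen' := isOpen_set_pi Set.finite_univ fun _ _ => isOpen_span_pow m

lemma mem_powSubgroup {m : ℕ} {v : Fin n → ℤ_[p]} :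
    v ∈ powSubgroup p n m ↔ ∀ i, (p : ℤ_[p]) ^ m ∣ v i := by
  simp_rw [← Ideal.mem_span_singleton]
  exact Set.mem_univ_pi

end Measure

section Coefficients

variable {p : ℕ} [Fact p.Prime] {n : ℕ}

lemma formPoly_consF0 (f0 : ℤ_[p]) (v : Fin n → ℤ_[p]) :
    formPoly n (consF0 p n f0 v) = formPoly n (consF0 p n 0 v) + C f0 * X ^ n := by
  rw [formPoly, formPoly, Finset.sum_range_succ', Finset.sum_range_succ', add_assoc]
  simp [consF0]

lemma coeff_formPoly_consF0_zero (v : Fin n → ℤ_[p]) (i : Fin n) :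
    (formPoly n (consF0 p n 0 v)).coeff (i.rev) = v i := by
  rw [coeff_formPoly, if_pos i.rev.is_lt.le, Fin.val_rev, consF0, if_neg (by omega),
    dif_pos (by omega)]
  congr
  omega

lemma degree_formPoly_consF0_zero_lt (v : Fin n → ℤ_[p]) :
    degree (formPoly n (consF0 p n 0 v)) < n := by
  refine (degree_lt_iff_coeff_zero _ _).2 fun k hk => ?_
  rw [coeff_formPoly]
  split_ifs with h
  · rw [le_antisymm h hk, Nat.sub_self, consF0, if_pos rfl]
  · rfl

lemma exists_formPoly_consF0_zero_eq {g : ℤ_[p][X]} (hg : g.degree < n) :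
    ∃ v, formPoly n (consF0 p n 0 v) = g := by
  refine ⟨fun i => g.coeff i.rev, Polynomial.ext fun k => ?_⟩
  rcases lt_or_ge k n with hk | hk
  · simpa using coeff_formPoly_consF0_zero (fun i => g.coeff i.rev) (Fin.rev ⟨k, hk⟩)
  · rw [coeff_eq_zero_of_degree_lt (hg.trans_le (by exact_mod_cast hk)),
      coeff_eq_zero_of_degree_lt
        ((degree_formPoly_consF0_zero_lt _).trans_le (by exact_mod_cast hk))]

lemma C_dvd_formPoly_sub_iff {a : ℤ_[p]} {v w : Fin n → ℤ_[p]} :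
    C a ∣ formPoly n (consF0 p n 0 v) - formPoly n (consF0 p n 0 w) ↔ ∀ i, a ∣ (-v + w) i := by
  have hcoeff : ∀ i : Fin n, a ∣ (-v + w) i ↔
      a ∣ (formPoly n (consF0 p n 0 v) - formPoly n (consF0 p n 0 w)).coeff i.rev := fun i => by
    rw [coeff_sub, coeff_formPoly_consF0_zero, coeff_formPoly_consF0_zero, Pi.add_apply,
      Pi.neg_apply, neg_add_eq_sub, dvd_sub_comm]
  simp_rw [C_dvd_iff_dvd_coeff, hcoeff]
  refine ⟨fun h i => h _, fun h k => ?_⟩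
  rcases lt_or_ge k n with hk | hk
  · simpa using h (Fin.rev ⟨k, hk⟩)
  · rw [coeff_eq_zero_of_degree_lt]
    · exact dvd_zero a
    · exact (degree_sub_le _ _).trans_lt (max_lt (degree_formPoly_consF0_zero_lt v)
        (degree_formPoly_consF0_zero_lt w)) |>.trans_le (by exact_mod_cast hk)

end Coefficients

section Squareful

lemma isPowUpToUnit_map_iff {α β : Type*} [Monoid α] [Monoid β] (e : α ≃* β) {i : ℕ} {F : α} :
    IsPowUpToUnit i (e F) ↔ IsPowUpToUnit i F := by
  refine e.surjective.exists.trans (exists_congr fun G => ?_)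
  rw [← map_pow]
  exact ⟨fun h => by simpa using h.map e.symm, fun h => h.map e⟩

variable {k : Type*} [Field k]

lemma exists_homogenize_eq_iff_isPowUpToUnit {n : ℕ} {F : k[X]} (hF : F ≠ 0)
    (hdeg : F.natDegree < n) :
    (∃ (κ : kˣ) (e d : ℕ) (H : MvPolynomial (Fin 2) k), 0 < e ∧ H.IsHomogeneous d ∧
      MvPolynomial.coeff (Finsupp.single 0 d) H = 1 ∧
      F.homogenize n = MvPolynomial.C (κ : k) * MvPolynomial.X 1 ^ e * H ^ 2) ↔
    IsPowUpToUnit 2 F := by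
  constructor
  · rintro ⟨κ, e, d, H, -, -, -, h⟩
    have heval := congrArg (MvPolynomial.aeval ![(X : k[X]), 1]) h
    rw [aeval_homogenize_X_one _ hdeg.le] at heval
    refine ⟨MvPolynomial.aeval ![(X : k[X]), 1] H, (isUnit_C.2 κ.isUnit).unit, ?_⟩
    simp [heval, mul_comm]
  · intro h
    obtain ⟨κ, G, hG, rfl⟩ := h.exists_monic hF two_ne_zero
    have hd : G.natDegree * 2 < n := by
      rwa [natDegree_C_mul κ.ne_zero, natDegree_pow, mul_comm] at hdeg
    have hn : n = 0 + (n - G.natDegree * 2) + G.natDegree * 2 := by omega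
    refine ⟨κ, n - G.natDegree * 2, G.natDegree, G.homogenize G.natDegree, Nat.sub_pos_of_lt hd,
      isHomogeneous_homogenize G, by simp [coeff_homogenize, hG], ?_⟩
    refine homogenize_eq_of_isHomogeneous ?_ ?_
    · conv => enter [2]; rw [hn]
      exact ((MvPolynomial.isHomogeneous_C _ _).mul
        (MvPolynomial.isHomogeneous_X_pow _ _)).mul ((isHomogeneous_homogenize G).pow 2)
    · simp [aeval_homogenize_X_one G le_rfl]

end Squareful

section Padic
variable {p : ℕ} [Fact p.Prime] {n : ℕ}

lemma redForm_eq_homogenize (n : ℕ) (c : ℕ → ℤ_[p]) :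
    redForm p n c = ((formPoly n c).map PadicInt.toZMod).homogenize n := by
  rw [redForm, map_formPoly, formPoly, homogenize_finsetSum]
  refine Finset.sum_congr rfl fun i hi => ?_
  have hi' := Finset.mem_range_succ_iff.1 hi
  rw [homogenize_C_mul, homogenize_X_pow (n.sub_le i), Nat.sub_sub_self hi', mul_assoc,
    Function.comp_apply]

lemma squarefulP_iff {c : ℕ → ℤ_[p]} (hdeg : (red (formPoly n c)).natDegree < n)
    (h0 : red (formPoly n c) ≠ 0) : SquarefulP p n c ↔ IsPowUpToUnit 2 (red (formPoly n c)) := by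
  let e := Polynomial.mapEquiv (PadicInt.residueField (p := p))
  have he : (formPoly n c).map PadicInt.toZMod = e (red (formPoly n c)) := by
    rw [PadicInt.toZMod_eq_residueField_comp_residue, ← Polynomial.map_map]
    rfl
  rw [SquarefulP, redForm_eq_homogenize, he, exists_homogenize_eq_iff_isPowUpToUnit]
  · exact isPowUpToUnit_map_iff e.toMulEquiv
  · simpa using h0
  · simpa [e, natDegree_map] using hdeg

lemma natCard_residueField : Nat.card (IsLocalRing.ResidueField ℤ_[p]) = p := by
  rw [Nat.card_congr PadicInt.residueField.toEquiv, Nat.card_zmod]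

lemma primP_iff {c : ℕ → ℤ_[p]} : PrimP p n c ↔ red (formPoly n c) ≠ 0 := by
  constructor
  · rintro ⟨i, hi, hu⟩ h0
    have hi0 := congrArg (coeff · (n - i)) h0
    rw [coe_mapRingHom, coeff_map, coeff_formPoly, if_pos (n.sub_le i), Nat.sub_sub_self hi,
      coeff_zero, IsLocalRing.residue_eq_zero_iff] at hi0
    exact hi0 hu
  · intro h
    by_contra hnot
    refine h (Polynomial.ext fun i => ?_)
    rw [coe_mapRingHom, coeff_map, coeff_formPoly, coeff_zero]
    split_ifs
    · rw [IsLocalRing.residue_eq_zero_iff]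
      exact fun hu => hnot ⟨n - i, n.sub_le i, hu⟩
    · exact map_zero _

lemma red_formPoly_consF0 {f0 : ℤ_[p]} (hf0 : (p : ℤ_[p]) ∣ f0) (v : Fin n → ℤ_[p]) :
    red (formPoly n (consF0 p n f0 v)) = red (formPoly n (consF0 p n 0 v)) := by
  rw [formPoly_consF0, map_add, add_eq_left,
    red_eq_zero_iff PadicInt.irreducible_p.maximalIdeal_eq]
  exact (map_dvd C hf0).mul_right _

lemma reflect_formPoly_consF0_mem_iff (hn : 0 < n) {f0 : ℤ_[p]} {v : Fin n → ℤ_[p]}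
    (h0 : red (formPoly n (consF0 p n 0 v)) ≠ 0) :
    (formPoly n (consF0 p n f0 v)).reflect n ∈ Ideal.span {C (p : ℤ_[p]), X} ^ 2 ↔
      (p : ℤ_[p]) ^ 2 ∣ f0 ∧ (red (formPoly n (consF0 p n 0 v))).natDegree ≠ n - 1 := by
  have hdeg : (red (formPoly n (consF0 p n 0 v))).natDegree < n :=
    (natDegree_lt_iff_degree_lt h0).2
      (degree_map_le.trans_lt (degree_formPoly_consF0_zero_lt v))
  have hc1 : (p : ℤ_[p]) ∣ consF0 p n f0 v 1 ↔
      (red (formPoly n (consF0 p n 0 v))).coeff (n - 1) = 0 := by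
    rw [coe_mapRingHom, coeff_map, coeff_formPoly, if_pos (n.sub_le 1), Nat.sub_sub_self hn,
      IsLocalRing.residue_eq_zero_iff, PadicInt.irreducible_p.maximalIdeal_eq,
      Ideal.mem_span_singleton]
    rfl
  rw [reflect_formPoly_mem_span_sq_iff hn, hc1]
  refine and_congr_right fun _ => ⟨fun h heq => ?_, fun h => ?_⟩
  · rw [← heq] at h
    exact leadingCoeff_ne_zero.2 h0 h
  · exact coeff_eq_zero_of_natDegree_lt (by omega)

lemma sepDegP_primP_isMaxOrder_iff (hn : 2 ≤ n) {g0 : ℤ_[p]} (hg0 : g0 ≠ 0)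
    (v : Fin n → ℤ_[p]) :
    (SepDegP p n (consF0 p n (p * g0) v) ∧ PrimP p n (consF0 p n (p * g0) v) ∧
      IsMaxOrder ℤ_[p] ℚ_[p] n (consF0 p n (p * g0) v)) ↔
    red (formPoly n (consF0 p n 0 v)) ≠ 0 ∧
      DedekindRegular (p : ℤ_[p]) (formPoly n (consF0 p n (p * g0) v)) ∧
      ((p : ℤ_[p]) ^ 2 ∣ p * g0 → (red (formPoly n (consF0 p n 0 v))).natDegree = n - 1) := by
  have hc : consF0 p n (p * g0) v 0 ≠ 0 := by
    simpa [consF0] using And.intro (Fact.out : p.Prime).ne_zero hg0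
  have hred := red_formPoly_consF0 (dvd_mul_right (p : ℤ_[p]) g0) v
  rw [primP_iff]
  constructor
  · rintro ⟨-, h0, hmax⟩
    rw [isMaxOrder_iff (K := ℚ_[p]) PadicInt.irreducible_p hn hc h0] at hmax
    rw [hred] at h0
    rw [reflect_formPoly_consF0_mem_iff (by omega) h0, not_and_not_right] at hmax
    exact ⟨h0, hmax⟩
  · rintro ⟨h0, hmax⟩
    rw [← not_and_not_right, ← reflect_formPoly_consF0_mem_iff (by omega) h0] at hmax
    rw [← hred] at h0
    rw [← isMaxOrder_iff (K := ℚ_[p]) PadicInt.irreducible_p hn hc h0] at hmax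
    exact ⟨⟨separable_binPoly_of_isMaxOrder hmax (by omega) hc h0, natDegree_binPoly hc⟩, h0, hmax⟩

/-- The digits of the form with leading coefficient `p * g0` and other coefficients `v`. -/
def formDigits (p n : ℕ) [Fact p.Prime] (g0 : ℤ_[p]) (v : Fin n → ℤ_[p]) :
    (IsLocalRing.ResidueField ℤ_[p])[X] × (IsLocalRing.ResidueField ℤ_[p])[X] :=
  digits PadicInt.irreducible_p (red (C g0 * X ^ n)) (formPoly n (consF0 p n 0 v))

lemma formDigits_eq_iff {g0 : ℤ_[p]} (v w : Fin n → ℤ_[p]) :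
    formDigits p n g0 v = formDigits p n g0 w ↔ -v + w ∈ powSubgroup p n 2 := by
  rw [formDigits, formDigits, digits_eq_iff, ← C_pow, C_dvd_formPoly_sub_iff, mem_powSubgroup]

/-- The possible degrees of the reduction of a maximal form with leading coefficient `f0`
divisible by `p`. -/
def maxDegrees (p n : ℕ) [Fact p.Prime] (f0 : ℤ_[p]) : Set ℕ :=
  {d | d < n ∧ ((p : ℤ_[p]) ^ 2 ∣ f0 → d = n - 1)}

lemma relPairs_subset_range_formDigits (S : Set (IsLocalRing.ResidueField ℤ_[p])[X])
    (f0 g0 : ℤ_[p]) :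
    relPairs S (maxDegrees p n f0) n ⊆ Set.range (formDigits p n g0) := by
  rintro ⟨F, B⟩ ⟨-, hF, ⟨hdeg, -⟩, hB, -⟩
  obtain ⟨g, hg, hgd⟩ := exists_digits_eq PadicInt.irreducible_p (red (C g0 * X ^ n))
    hF ((natDegree_lt_iff_degree_lt hF).1 hdeg) hB
  obtain ⟨v, rfl⟩ := exists_formPoly_consF0_zero_eq hg
  exact ⟨v, hgd⟩

lemma formDigits_mem_relPairs_iff {S : Set (IsLocalRing.ResidueField ℤ_[p])[X]}
    (hn : 2 ≤ n) {g0 : ℤ_[p]} (hg0 : g0 ≠ 0) {v : Fin n → ℤ_[p]} :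
    formDigits p n g0 v ∈ relPairs S (maxDegrees p n (p * g0)) n ↔
      (SepDegP p n (consF0 p n (p * g0) v) ∧ PrimP p n (consF0 p n (p * g0) v) ∧
        IsMaxOrder ℤ_[p] ℚ_[p] n (consF0 p n (p * g0) v)) ∧
      red (formPoly n (consF0 p n (p * g0) v)) ∈ S := by
  have hlt := degree_formPoly_consF0_zero_lt v
  rw [sepDegP_primP_isMaxOrder_iff hn hg0, red_formPoly_consF0 (dvd_mul_right _ g0),
    formPoly_consF0 ((p : ℤ_[p]) * g0), C_mul, mul_assoc]
  constructor
  · rintro ⟨hS, h0, ⟨-, hdeg⟩, -, hrel⟩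
    exact ⟨⟨h0, (dedekindRegular_add_iff_digits _ h0 _).2 hrel, hdeg⟩, hS⟩
  · rintro ⟨⟨h0, hreg, hdeg⟩, hS⟩
    exact ⟨hS, h0, ⟨(natDegree_lt_iff_degree_lt h0).2 (degree_map_le.trans_lt hlt), hdeg⟩,
      degree_digits_snd_lt _ _ hlt h0, (dedekindRegular_add_iff_digits _ h0 _).1 hreg⟩

lemma squareful_iff_formDigits_mem (hn : 2 ≤ n) {g0 : ℤ_[p]} (hg0 : g0 ≠ 0) {v : Fin n → ℤ_[p]} :
    formDigits p n g0 v ∈ relPairs {F | IsPowUpToUnit 2 F} (maxDegrees p n (p * g0)) n ↔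
      SepDegP p n (consF0 p n (p * g0) v) ∧ PrimP p n (consF0 p n (p * g0) v) ∧
        IsMaxOrder ℤ_[p] ℚ_[p] n (consF0 p n (p * g0) v) ∧
        SquarefulP p n (consF0 p n (p * g0) v) := by
  rw [formDigits_mem_relPairs_iff hn hg0, and_assoc, and_assoc]
  refine and_congr_right fun _ => and_congr_right fun hprim => and_congr_right fun _ => ?_
  rw [primP_iff] at hprim
  rw [Set.mem_ofPred_eq, squarefulP_iff _ hprim]
  rw [red_formPoly_consF0 (dvd_mul_right _ g0)] at hprim ⊢
  exact (natDegree_lt_iff_degree_lt hprim).2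
    (degree_map_le.trans_lt (degree_formPoly_consF0_zero_lt v))

lemma ncard_relPairs_maxDegrees_div (hn : 3 ≤ n) (hodd : Odd n) (f0 : ℤ_[p]) :
    ((relPairs {F : (IsLocalRing.ResidueField ℤ_[p])[X] | IsPowUpToUnit 2 F}
        (maxDegrees p n f0) n).ncard : ℝ) /
      (relPairs (Set.univ : Set (IsLocalRing.ResidueField ℤ_[p])[X]) (maxDegrees p n f0) n).ncard =
      ((p : ℝ) ^ ((n - 1) / 2))⁻¹ * (1 + (p : ℝ)⁻¹)⁻¹ := by
  obtain ⟨m, rfl⟩ : ∃ m, n = 2 * m + 3 := by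
    obtain ⟨m, rfl⟩ := hodd
    exact ⟨m - 1, by omega⟩
  have hexp : (2 * m + 3 - 1) / 2 = m + 1 := by omega
  have hfin : Finite (IsLocalRing.ResidueField ℤ_[p]) :=
    .of_equiv _ PadicInt.residueField.symm.toEquiv
  rw [hexp]
  by_cases hf : (p : ℤ_[p]) ^ 2 ∣ f0
  · have hD : maxDegrees p (2 * m + 3) f0 = {2 * m + 2} := by
      ext d
      simp only [maxDegrees, hf, true_imp_iff, Set.mem_ofPred_eq, Set.mem_singleton_iff]
      omega
    rw [hD, ncard_relPairs_singleton_div, natCard_residueField]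
  · have hD : maxDegrees p (2 * m + 3) f0 = Finset.range (2 * m + 3) := by
      ext d
      simp [maxDegrees, hf]
    rw [hD, ncard_relPairs_range_div, natCard_residueField]

theorem squareful_density_general
    (p : ℕ) [Fact p.Prime]
    (n : ℕ) (hn : 3 ≤ n) (hodd : Odd n)
    (f0 : ℤ_[p]) (hf0 : f0 ≠ 0) (hpf0 : (p : ℤ_[p]) ∣ f0) :
    densIn p n
      {v | SepDegP p n (consF0 p n f0 v) ∧ PrimP p n (consF0 p n f0 v) ∧
        IsMaxOrder ℤ_[p] ℚ_[p] n (consF0 p n f0 v) ∧ SquarefulP p n (consF0 p n f0 v)}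
      {v | SepDegP p n (consF0 p n f0 v) ∧ PrimP p n (consF0 p n f0 v) ∧
        IsMaxOrder ℤ_[p] ℚ_[p] n (consF0 p n f0 v)} =
      ((p : ℝ) ^ ((n - 1) / 2))⁻¹ * (1 + (p : ℝ)⁻¹)⁻¹ := by
  obtain ⟨g0, rfl⟩ := hpf0
  have hg0 : g0 ≠ 0 := right_ne_zero_of_mul hf0
  rw [← ncard_relPairs_maxDegrees_div hn hodd ((p : ℤ_[p]) * g0),
    ← densIn_preimage (powSubgroup p n 2) (formDigits_eq_iff (g0 := g0))]
  · congr
    · ext v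
      exact (squareful_iff_formDigits_mem (by omega) hg0).symm
    · ext v
      exact ((formDigits_mem_relPairs_iff (by omega) hg0).trans
        (and_iff_left (Set.mem_univ _))).symm
  · exact fun x hx => ⟨trivial, hx.2⟩
  · exact finite_relPairs _ ((Set.finite_lt_nat n).subset fun d hd => hd.1) n
  · exact relPairs_subset_range_formDigits _ _ _

end Padic

/-- Theorem 3.9: for odd `n` and `v_p(f_0)` odd, the density of
squareful forms within `F_{n,max}(f_0, ℤ_p)` equals `p^{(1-n)/2}·(1 + p^{-1})^{-1}`. -/
theorem squareful_density
    (p : ℕ) [Fact p.Prime]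
    (n : ℕ) (hn : 3 ≤ n) (hodd : Odd n)
    (f0 : ℤ_[p]) (hf0 : f0 ≠ 0) (hval : Odd f0.valuation) :
    densIn p n
      {v | SepDegP p n (consF0 p n f0 v) ∧ PrimP p n (consF0 p n f0 v) ∧
        IsMaxOrder ℤ_[p] ℚ_[p] n (consF0 p n f0 v) ∧ SquarefulP p n (consF0 p n f0 v)}
      {v | SepDegP p n (consF0 p n f0 v) ∧ PrimP p n (consF0 p n f0 v) ∧
        IsMaxOrder ℤ_[p] ℚ_[p] n (consF0 p n f0 v)} =
      ((p : ℝ) ^ ((n - 1) / 2))⁻¹ * (1 + (p : ℝ)⁻¹)⁻¹ := by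
  refine squareful_density_general p n hn hodd f0 hf0 ?_
  rw [PadicInt.unitCoeff_spec hf0]
  exact (dvd_pow_self _ hval.pos.ne').mul_left _

end BHS
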